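/- Let A_{N,1}, …, A_{N,L} be independent families of N×N random matrices that are uniformly bounded in operator norm, and assume that each family, except possibly one, is permutation invariant. Fix n ≥ 2 and ℓ_1, …, ℓ_n ∈ {1,…,L} with ℓ_i ≠ ℓ_{i+1} for 1 ≤ i ≤ n−1. For each i ∈ {1,…,n} let d_i ≥ 1, k_i(1), …, k_i(d_i) ∈ K, and let g_{0,i}, …, g_{d_i,i} be cactus-type monomials (independent of N); set M_{N,i} = g_{0,i}(A_N) · A_{N,ℓ_i}^{(k_i(1))} · g_{1,i}(A_N) ⋯ A_{N,ℓ_i}^{(k_i(d_i))} · g_{d_i,i}(A_N) and ε_N = Δ[(M_{N,1} − ΔM_{N,1}) ⋯ (M_{N,n} − ΔM_{N,n})]. Then for every integer p ≥ 1, E[(1/N) Tr((ε_N ε_N*)^p)] → 0 as N → ∞. -/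

import Mathlib

open MeasureTheory ProbabilityTheory Filter Matrix Asymptotics
open scoped BigOperators ENNReal
open scoped Classical

noncomputable section

/-- The diagonal projection `Δ` on `N × N` complex matrices. -/
def dproj {N : ℕ} (A : Matrix (Fin N) (Fin N) ℂ) : Matrix (Fin N) (Fin N) ℂ :=
  Matrix.of fun i j => if i = j then A i j else 0

/-- The operator norm of a matrix acting on `ℓ²({1,…,N})`. -/
def matOpNorm {N : ℕ} (A : Matrix (Fin N) (Fin N) ℂ) : ℝ :=
  ‖Matrix.toEuclideanCLM (𝕜 := ℂ) A‖

/-! ### Multigraph combinatorics -/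

section Graph

variable {V E : Type} (src tgt : E → V)

/-- Adjacency through an edge avoiding a forbidden set `F` of edges
(direction is ignored). -/
def adjOn (F : Set E) (a b : V) : Prop :=
  ∃ e, e ∉ F ∧ ((src e = a ∧ tgt e = b) ∨ (src e = b ∧ tgt e = a))

/-- Reachability in the graph, using only edges outside `F`. -/
def reachOn (F : Set E) : V → V → Prop :=
  Relation.ReflTransGen (adjOn src tgt F)

lemma adjOn_symm (F : Set E) : Symmetric (adjOn src tgt F) := by
  rintro a b ⟨e, he, h⟩
  exact ⟨e, he, h.symm⟩

/-- The setoid of connectivity using edges outside `F`. -/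
def connSetoid (F : Set E) : Setoid V :=
  ⟨reachOn src tgt F,
    ⟨fun _ => Relation.ReflTransGen.refl,
     fun h => (@Relation.ReflTransGen.symmetric _ _ ⟨fun _ _ h' => adjOn_symm src tgt F h'⟩).symm _ _ h,
     fun h h' => Relation.ReflTransGen.trans h h'⟩⟩

/-- Number of connected components of the graph with the edges in `F` deleted. -/
def ncompAvoiding (F : Set E) : ℕ :=
  Nat.card (Quotient (connSetoid src tgt F))

/-- Number of connected components. -/
def ncomp : ℕ := ncompAvoiding src tgt ∅

/-- The graph is connected. -/
def IsConnectedGraph : Prop := ∀ a b : V, reachOn src tgt ∅ a b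

/-- A cut edge (bridge): deleting it disconnects its endpoints. -/
def IsCutEdge (e : E) : Prop := ¬ reachOn src tgt {e} (src e) (tgt e)

/-- The set of cut edges. -/
def cutEdges : Set E := {e | IsCutEdge src tgt e}

/-- The setoid whose classes are the two-edge connected components
(connected components after deleting all cut edges). -/
def teccSetoid : Setoid V := connSetoid src tgt (cutEdges src tgt)

/-- Degree, in the forest of two-edge connected components, of a
two-edge connected component: the number of cut edges incident to it. -/
def teccDeg (c : Quotient (teccSetoid src tgt)) : ℕ :=
  Nat.card {e : E // IsCutEdge src tgt e ∧
    (Quotient.mk (teccSetoid src tgt) (src e) = c ∨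
      Quotient.mk (teccSetoid src tgt) (tgt e) = c)}

/-- `𝔣(G)`: the number of leaves of the forest of two-edge connected components,
single-vertex trees of the forest counting twice. -/
def frak : ℕ :=
  Nat.card {c : Quotient (teccSetoid src tgt) // teccDeg src tgt c = 1} +
    2 * Nat.card {c : Quotient (teccSetoid src tgt) // teccDeg src tgt c = 0}

end Graph

/-! ### Graph monomials -/

/-- A graph monomial: a finite directed multigraph with two roots and edges
labelled by a family index in `Fin L` and an index in `K`.  (Connectedness is
required separately via `IsConnectedGraph`.) -/
structure GraphMonomial (L : ℕ) (K : Type) where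
  V : Type
  E : Type
  fintV : Fintype V
  fintE : Fintype E
  src : E → V
  tgt : E → V
  vin : V
  vout : V
  labL : E → Fin L
  labK : E → K

attribute [instance] GraphMonomial.fintV GraphMonomial.fintE

namespace GraphMonomial

variable {L : ℕ} {K : Type} (g : GraphMonomial L K)

/-- Evaluation of a graph monomial in a collection of matrices. -/
def eval {N : ℕ} (A : Fin L → K → Matrix (Fin N) (Fin N) ℂ) :
    Matrix (Fin N) (Fin N) ℂ :=
  Matrix.of fun i j => ∑ φ : g.V → Fin N,
    if φ g.vin = j ∧ φ g.vout = i then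
      ∏ e : g.E, A (g.labL e) (g.labK e) (φ (g.tgt e)) (φ (g.src e))
    else 0

/-- The starting vertex of a step `(e, b)`: `e` traversed forward if `b = true`,
backward otherwise. -/
def stepSrc (s : g.E × Bool) : g.V := if s.2 then g.src s.1 else g.tgt s.1

/-- The ending vertex of a step. -/
def stepTgt (s : g.E × Bool) : g.V := if s.2 then g.tgt s.1 else g.src s.1

/-- A simple cycle of the underlying undirected multigraph: a nonempty cyclic
sequence of steps with pairwise distinct edges and pairwise distinct vertices. -/
def IsSimpleCycle (c : List (g.E × Bool)) : Prop :=
  ∃ h : c ≠ [],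
    (∀ i : Fin c.length,
      g.stepTgt (c.get i) =
        g.stepSrc (c.get ⟨((i : ℕ) + 1) % c.length,
          Nat.mod_lt _ (List.length_pos_iff.mpr h)⟩)) ∧
    (c.map Prod.fst).Nodup ∧ (c.map g.stepSrc).Nodup

/-- A cycle is directed when it traverses all its edges consistently with
their orientations (one way or the other). -/
def IsDirectedCycleList (c : List (g.E × Bool)) : Prop :=
  (∀ s ∈ c, s.2 = true) ∨ (∀ s ∈ c, s.2 = false)

/-- `S` is the edge set of some simple cycle. -/
def IsCycleEdgeSet (S : Finset g.E) : Prop :=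
  ∃ c, g.IsSimpleCycle c ∧ (c.map Prod.fst).toFinset = S

/-- The underlying graph is an oriented cactus: it is connected, every simple
cycle is directed, and every edge belongs to exactly one simple cycle. -/
def IsOrientedCactus : Prop :=
  IsConnectedGraph g.src g.tgt ∧
  (∀ c, g.IsSimpleCycle c → g.IsDirectedCycleList c) ∧
  (∀ e : g.E, ∃! S : Finset g.E, g.IsCycleEdgeSet S ∧ e ∈ S)

/-- A cactus-type monomial: an oriented cactus whose input and output coincide. -/
def IsCactusType : Prop := g.vin = g.vout ∧ g.IsOrientedCactus

/-- A member of `ℱ`: a directed simple path (oriented from the input, at the far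
right, to the output, at the far left) with oriented cacti attached to the
vertices of the path (the root of each cactus being a path vertex). -/
def IsPathCactusType : Prop :=
  IsConnectedGraph g.src g.tgt ∧
  ∃ (d : ℕ) (v : Fin (d + 1) → g.V) (f : Fin d → g.E),
    Function.Injective v ∧ Function.Injective f ∧
    (∀ j : Fin d, g.src (f j) = v j.succ ∧ g.tgt (f j) = v j.castSucc) ∧
    g.vin = v (Fin.last d) ∧ g.vout = v 0 ∧
    (∀ c, g.IsSimpleCycle c → g.IsDirectedCycleList c ∧ ∀ s ∈ c, s.1 ∉ Set.range f) ∧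
    (∀ e : g.E, e ∉ Set.range f →
      ∃! S : Finset g.E, g.IsCycleEdgeSet S ∧ e ∈ S) ∧
    (∀ w : g.V, ∃! j : Fin (d + 1), reachOn g.src g.tgt (Set.range f) w (v j))

end GraphMonomial
/-! ### Random matrices, expectations, test graphs -/

/-- The entries of the random matrix `X` are measurable. -/
def EntriesMeasurable {N : ℕ} {Ω : Type} [MeasurableSpace Ω]
    (X : Ω → Matrix (Fin N) (Fin N) ℂ) : Prop :=
  ∀ i j, Measurable fun ω => X ω i j

/-- The entries of the random matrix `X` are essentially bounded. -/
def EntriesBounded {N : ℕ} {Ω : Type} [MeasurableSpace Ω] (μ : Measure Ω)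
    (X : Ω → Matrix (Fin N) (Fin N) ℂ) : Prop :=
  ∃ C : ℝ, ∀ᵐ ω ∂μ, ∀ i j, ‖X ω i j‖ ≤ C

/-- The σ-algebra generated by the entries of the matrices of a family. -/
def famSigma {N : ℕ} {Ω K : Type} [MeasurableSpace Ω]
    (A : K → Ω → Matrix (Fin N) (Fin N) ℂ) : MeasurableSpace Ω :=
  ⨆ k : K, ⨆ i : Fin N, ⨆ j : Fin N,
    MeasurableSpace.comap (fun ω => A k ω i j) inferInstance

/-- Permutation invariance of a family of `N × N` random matrices. -/
def PermInvariant {N : ℕ} {Ω K : Type} [MeasurableSpace Ω] (μ : Measure Ω)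
    (A : K → Ω → Matrix (Fin N) (Fin N) ℂ) : Prop :=
  ∀ σ : Equiv.Perm (Fin N),
    Measure.map (fun ω => fun (k : K) (i j : Fin N) => A k ω (σ i) (σ j)) μ =
      Measure.map (fun ω => fun (k : K) (i j : Fin N) => A k ω i j) μ

/-- A test graph with matrix-valued edge labels. -/
structure TestGraph (N : ℕ) (Ω : Type) where
  V : Type
  E : Type
  fintV : Fintype V
  fintE : Fintype E
  src : E → V
  tgt : E → V
  lab : E → Ω → Matrix (Fin N) (Fin N) ℂ

attribute [instance] TestGraph.fintV TestGraph.fintE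

namespace TestGraph

variable {N : ℕ} {Ω : Type} [MeasurableSpace Ω]

/-- Number of connected components `c(T)` of a test graph. -/
def ncc (T : TestGraph N Ω) : ℕ := ncomp T.src T.tgt

/-- The (unnormalized) trace observable of a test graph. -/
def tauInner (T : TestGraph N Ω) (ω : Ω) : ℂ :=
  ∑ φ : T.V → Fin N, ∏ e : T.E, T.lab e ω (φ (T.tgt e)) (φ (T.src e))

/-- The (unnormalized) injective trace observable of a test graph. -/
def tau0Inner (T : TestGraph N Ω) (ω : Ω) : ℂ :=
  ∑ φ : T.V → Fin N,
    if Function.Injective φ then ∏ e : T.E, T.lab e ω (φ (T.tgt e)) (φ (T.src e)) else 0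

/-- `τ_N[T]`. -/
def tau (T : TestGraph N Ω) (μ : Measure Ω) : ℂ :=
  ((N : ℂ) ^ T.ncc)⁻¹ * ∫ ω, T.tauInner ω ∂μ

/-- `τ⁰_N[T]`. -/
def tau0 (T : TestGraph N Ω) (μ : Measure Ω) : ℂ :=
  ((N : ℂ) ^ T.ncc)⁻¹ * ∫ ω, T.tau0Inner ω ∂μ

/-- The quotient test graph `T^π` associated with a partition `π` of the
vertices of `T`. -/
def quot (T : TestGraph N Ω) (π : Setoid T.V) : TestGraph N Ω where
  V := Quotient π
  E := T.E
  fintV := @Quotient.fintype _ T.fintV π fun _ _ => Classical.propDecidable _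
  fintE := T.fintE
  src := fun e => Quotient.mk π (T.src e)
  tgt := fun e => Quotient.mk π (T.tgt e)
  lab := T.lab

end TestGraph

/-- Monomial `D₀ X_{k(1)} D₁ ⋯ X_{k(d)} D_d` evaluated in a family of matrices:
the coefficients are given as an arbitrary function `D : ℕ → Matrix`. -/
def monomialEval {K : Type} {N : ℕ} (A : K → Matrix (Fin N) (Fin N) ℂ)
    (dd : ℕ) (kk : ℕ → K) (D : ℕ → Matrix (Fin N) (Fin N) ℂ) :
    Matrix (Fin N) (Fin N) ℂ :=
  D 0 * (List.ofFn fun j : Fin dd => A (kk ((j : ℕ) + 1)) * D ((j : ℕ) + 1)).prod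

/-- The centered product `(M₁ - ΔM₁)(M₂ - ΔM₂)⋯(Mₙ - ΔMₙ)`. -/
def centeredProd {N n : ℕ} (M : Fin n → Matrix (Fin N) (Fin N) ℂ) :
    Matrix (Fin N) (Fin N) ℂ :=
  (List.ofFn fun i : Fin n => M i - dproj (M i)).prod

/-- Mutual independence of the families `A 1, …, A L` of random matrices. -/
def IndepFamilies {Ω K : Type} {L : ℕ} [MeasurableSpace Ω] (μ : Measure Ω)
    (A : (N : ℕ) → Fin L → K → Ω → Matrix (Fin N) (Fin N) ℂ) : Prop :=
  ∀ N : ℕ, ProbabilityTheory.iIndep (fun ℓ : Fin L => famSigma (A N ℓ)) μ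

/-- Uniform boundedness, in operator norm, of families of random matrices. -/
def UnifOpNormBound {Ω K : Type} {L : ℕ} [MeasurableSpace Ω] (μ : Measure Ω)
    (A : (N : ℕ) → Fin L → K → Ω → Matrix (Fin N) (Fin N) ℂ) : Prop :=
  ∃ C : ℝ, ∀ (N : ℕ) (ℓ : Fin L) (k : K), ∀ᵐ ω ∂μ, matOpNorm (A N ℓ k ω) ≤ C

/-- The growth bound (MS) for the family `A · ℓ`:
for all graph monomials `g₁, …, gₘ` labelled in the single family `ℓ` and having
equal input and output, `E[∏ᵢ Tr gᵢ(A_N)] = O(N^{Σᵢ 𝔣(gᵢ)/2})` as `N → ∞`. -/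
def MSBound {Ω K : Type} {L : ℕ} [MeasurableSpace Ω] (μ : Measure Ω)
    (A : (N : ℕ) → Fin L → K → Ω → Matrix (Fin N) (Fin N) ℂ) (ℓ : Fin L) : Prop :=
  ∀ (m : ℕ), 1 ≤ m → ∀ gs : Fin m → GraphMonomial L K,
    (∀ i : Fin m, IsConnectedGraph (gs i).src (gs i).tgt ∧
      (∀ e, (gs i).labL e = ℓ) ∧ (gs i).vin = (gs i).vout) →
    (fun N : ℕ => ∫ ω, ∏ i : Fin m,
        Matrix.trace ((gs i).eval fun ℓ' k => A N ℓ' k ω) ∂μ)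
      =O[atTop] fun N : ℕ => (N : ℝ) ^ ((∑ i : Fin m, (frak (gs i).src (gs i).tgt : ℝ)) / 2)
/-- The monomial `g₀(A) X_{k(1)} g₁(A) ⋯ X_{k(d)} g_d(A)` with graph-monomial
coefficients, evaluated at the family `A ℓi`. -/
def cactusMonomialEval {L : ℕ} {K : Type} {N : ℕ}
    (A : Fin L → K → Matrix (Fin N) (Fin N) ℂ) (ℓi : Fin L) (dd : ℕ)
    (kk : ℕ → K) (gg : ℕ → GraphMonomial L K) : Matrix (Fin N) (Fin N) ℂ :=
  (gg 0).eval A *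
    (List.ofFn fun j : Fin dd =>
      A ℓi (kk ((j : ℕ) + 1)) * (gg ((j : ℕ) + 1)).eval A).prod

/-! ### Reachability in multigraphs -/

section Reach

variable {V E : Type} {src tgt : E → V} {F F' : Set E} {a b c : V}

lemma reachOn_symm (h : reachOn src tgt F a b) : reachOn src tgt F b a :=
  (connSetoid src tgt F).symm h

lemma reachOn_of_edge {e : E} (he : e ∉ F) : reachOn src tgt F (src e) (tgt e) :=
  Relation.ReflTransGen.single ⟨e, he, Or.inl ⟨rfl, rfl⟩⟩

lemma reachOn_of_edge_symm {e : E} (he : e ∉ F) : reachOn src tgt F (tgt e) (src e) :=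
  Relation.ReflTransGen.single ⟨e, he, Or.inr ⟨rfl, rfl⟩⟩

/-- Transport of reachability along a graph map whose edges become reachable pairs. -/
lemma reachOn_lift {V' E' : Type} {src' tgt' : E' → V'} {G : Set E'} (f : V → V')
    (hf : ∀ e, e ∉ F → reachOn src' tgt' G (f (src e)) (f (tgt e)))
    (h : reachOn src tgt F a b) : reachOn src' tgt' G (f a) (f b) := by
  induction h with
  | refl => exact Relation.ReflTransGen.refl
  | tail _ hstep ih =>
    obtain ⟨e, he, ⟨rfl, rfl⟩ | ⟨rfl, rfl⟩⟩ := hstep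
    · exact ih.trans (hf e he)
    · exact ih.trans (reachOn_symm (hf e he))

lemma reachOn_mono (hF : F' ⊆ F) (h : reachOn src tgt F a b) : reachOn src tgt F' a b :=
  reachOn_lift (src' := src) (tgt' := tgt) id
    (fun _ he => reachOn_of_edge fun h' => he (hF h')) h

/-- Deleting one more edge `f` either keeps a connection or forces it through `f`. -/
lemma reachOn_insert_or (f : E) (h : reachOn src tgt F a b) :
    reachOn src tgt (insert f F) a b ∨
      (reachOn src tgt (insert f F) a (src f) ∧ reachOn src tgt (insert f F) (tgt f) b) ∨
      (reachOn src tgt (insert f F) a (tgt f) ∧ reachOn src tgt (insert f F) (src f) b) := by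
  induction h with
  | refl => exact Or.inl Relation.ReflTransGen.refl
  | @tail x y _ hstep ih =>
    obtain ⟨e, he, hxy⟩ := hstep
    by_cases hef : e = f
    · subst hef
      rcases hxy with ⟨rfl, rfl⟩ | ⟨rfl, rfl⟩
      · rcases ih with h | ⟨h, _⟩ | ⟨h, _⟩
        · exact Or.inr (Or.inl ⟨h, .refl⟩)
        · exact Or.inr (Or.inl ⟨h, .refl⟩)
        · exact Or.inl h
      · rcases ih with h | ⟨h, _⟩ | ⟨h, _⟩
        · exact Or.inr (Or.inr ⟨h, .refl⟩)
        · exact Or.inl h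
        · exact Or.inr (Or.inr ⟨h, .refl⟩)
    · have hxy' : reachOn src tgt (insert f F) x y :=
        Relation.ReflTransGen.single ⟨e, by simp [hef, he], hxy⟩
      rcases ih with h | ⟨h, h'⟩ | ⟨h, h'⟩
      · exact Or.inl (h.trans hxy')
      · exact Or.inr (Or.inl ⟨h, h'.trans hxy'⟩)
      · exact Or.inr (Or.inr ⟨h, h'.trans hxy'⟩)

/-- The endpoints of an edge which is not a cut edge stay connected after deleting this edge
together with any finite set of cut edges. -/
lemma reachOn_union_cutEdges [Finite E] {e : E} (he : ¬ IsCutEdge src tgt e) :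
    reachOn src tgt (insert e (cutEdges src tgt)) (src e) (tgt e) := by
  suffices H : ∀ D : Set E, D.Finite → D ⊆ cutEdges src tgt →
      reachOn src tgt (insert e D) (src e) (tgt e) from H _ (Set.toFinite _) subset_rfl
  intro D hD
  induction D, hD using Set.Finite.induction_on with
  | empty =>
    intro _
    simpa [IsCutEdge] using he
  | @insert f D _ _ ih =>
    intro hsub
    have h := ih fun x hx => hsub (Set.mem_insert_of_mem _ hx)
    have hf : IsCutEdge src tgt f := hsub (Set.mem_insert _ _)
    have hef : e ≠ f := fun h' => he (h' ▸ hf)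
    rw [Set.insert_comm]
    have hm : ({f} : Set E) ⊆ insert f (insert e D) := by simp
    have hE : reachOn src tgt {f} (src e) (tgt e) := reachOn_of_edge (by simpa using hef)
    rcases reachOn_insert_or f h with h | ⟨h1, h2⟩ | ⟨h1, h2⟩
    · exact h
    · exact absurd (((reachOn_symm (reachOn_mono hm h1)).trans hE).trans
        (reachOn_symm (reachOn_mono hm h2))) hf
    · exact absurd (((reachOn_mono hm h2).trans (reachOn_symm hE)).trans
        (reachOn_mono hm h1)) hf

/-- Deleting a set of edges from a connected graph creates at most one component per edge. -/
lemma ncompAvoiding_le [Finite V] [Finite E] (hconn : IsConnectedGraph src tgt) (D : Set E) :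
    ncompAvoiding src tgt D ≤ D.ncard + 1 := by
  induction D, D.toFinite using Set.Finite.induction_on with
  | empty =>
    have : Subsingleton (Quotient (connSetoid src tgt ∅)) := by
      constructor
      rintro ⟨x⟩ ⟨y⟩
      exact Quotient.sound (hconn x y)
    simpa [ncompAvoiding] using Finite.card_le_one_iff_subsingleton.mpr this
  | @insert f D hfD _ ih =>
    rw [Set.ncard_insert_of_notMem hfD (Set.toFinite _)]
    refine le_trans ?_ (Nat.succ_le_succ ih)
    have hcard : Nat.card (Option (Quotient (connSetoid src tgt D))) =
        ncompAvoiding src tgt D + 1 := Finite.card_option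
    rw [Nat.succ_eq_add_one, ← hcard]
    refine Nat.card_le_card_of_injective
      (fun q : Quotient (connSetoid src tgt (insert f D)) =>
        if q = Quotient.mk _ (tgt f) then none
        else some (Quotient.mk (connSetoid src tgt D) q.out)) ?_
    intro p q hpq
    by_cases hp : p = Quotient.mk _ (tgt f) <;> by_cases hq : q = Quotient.mk _ (tgt f)
    · rw [hp, hq]
    · simp [hp, hq] at hpq
    · simp [hp, hq] at hpq
    · simp only [hp, hq, if_false, Option.some.injEq] at hpq
      have hpo : p = Quotient.mk _ p.out := (Quotient.out_eq p).symm
      have hqo : q = Quotient.mk _ q.out := (Quotient.out_eq q).symm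
      have h : reachOn src tgt D p.out q.out := Quotient.exact hpq
      rcases reachOn_insert_or f h with h | ⟨_, h⟩ | ⟨h, _⟩
      · rw [hpo, hqo]
        exact Quotient.sound h
      · exact absurd (hqo.trans (Quotient.sound (reachOn_symm h))) hq
      · exact absurd (hpo.trans (Quotient.sound h)) hp

end Reach

/-! ### Operator norms -/

section OpNorm

open scoped Matrix.Norms.L2Operator

variable {N : ℕ} (B C : Matrix (Fin N) (Fin N) ℂ)

lemma matOpNorm_eq_norm : matOpNorm B = ‖B‖ := Matrix.l2_opNorm_toEuclideanCLM B

lemma matOpNorm_mul_le : matOpNorm (B * C) ≤ matOpNorm B * matOpNorm C := by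
  simpa only [matOpNorm_eq_norm] using norm_mul_le B C

lemma matOpNorm_conjTranspose : matOpNorm Bᴴ = matOpNorm B := by
  simpa only [matOpNorm_eq_norm] using Matrix.l2_opNorm_conjTranspose B

lemma matOpNorm_nonneg : 0 ≤ matOpNorm B := norm_nonneg _

lemma matOpNorm_smul (z : ℂ) : matOpNorm (z • B) = ‖z‖ * matOpNorm B := by
  simpa only [matOpNorm_eq_norm] using norm_smul z B

lemma matOpNorm_diagonal_le (x : Fin N → ℂ) (hx : ∀ i, ‖x i‖ ≤ 1) :
    matOpNorm (Matrix.diagonal x) ≤ 1 := by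
  rw [matOpNorm_eq_norm, Matrix.l2_opNorm_diagonal]
  exact (pi_norm_le_iff_of_nonneg zero_le_one).mpr hx

lemma matOpNorm_one_le : matOpNorm (1 : Matrix (Fin N) (Fin N) ℂ) ≤ 1 := by
  rw [← Matrix.diagonal_one]
  exact matOpNorm_diagonal_le _ (by simp)

lemma sum_sq_mulVec_le (x : Fin N → ℂ) :
    ∑ i, ‖(B *ᵥ x) i‖ ^ 2 ≤ matOpNorm B ^ 2 * ∑ i, ‖x i‖ ^ 2 := by
  have h := Matrix.l2_opNorm_mulVec B (WithLp.toLp 2 x)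
  rw [← matOpNorm_eq_norm] at h
  have h2 := pow_le_pow_left₀ (norm_nonneg _) h 2
  rw [mul_pow, EuclideanSpace.norm_sq_eq, EuclideanSpace.norm_sq_eq] at h2
  simpa using h2

lemma matOpNorm_le_of_mulVec {c : ℝ} (hc : 0 ≤ c)
    (h : ∀ x : Fin N → ℂ, ∑ i, ‖(B *ᵥ x) i‖ ^ 2 ≤ c ^ 2 * ∑ i, ‖x i‖ ^ 2) :
    matOpNorm B ≤ c := by
  refine ContinuousLinearMap.opNorm_le_bound _ hc fun x => ?_
  refine le_of_sq_le_sq ?_ (by positivity)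
  rw [mul_pow, EuclideanSpace.norm_sq_eq, EuclideanSpace.norm_sq_eq]
  simpa using h x

lemma matOpNorm_transpose_le : matOpNorm Bᵀ ≤ matOpNorm B := by
  refine matOpNorm_le_of_mulVec _ (matOpNorm_nonneg B) fun x => ?_
  have h := sum_sq_mulVec_le Bᴴ (star x)
  rw [matOpNorm_conjTranspose] at h
  have hstar : Bᴴ *ᵥ star x = star (Bᵀ *ᵥ x) := by
    rw [Matrix.star_mulVec, Matrix.vecMul_conjTranspose]
    ext i
    simp [Matrix.mulVec, dotProduct]
  simpa [hstar] using h

lemma sum_sq_row_le (i : Fin N) : ∑ j, ‖B i j‖ ^ 2 ≤ matOpNorm B ^ 2 := by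
  have h := sum_sq_mulVec_le Bᵀ (Pi.single i 1)
  have h1 : ∑ j, ‖(Pi.single i 1 : Fin N → ℂ) j‖ ^ 2 = 1 := by
    rw [Finset.sum_eq_single i] <;> simp +contextual
  rw [h1, mul_one] at h
  simp only [Matrix.mulVec_single_one, Matrix.col_apply, Matrix.transpose_apply] at h
  exact h.trans (pow_le_pow_left₀ (matOpNorm_nonneg _) (matOpNorm_transpose_le B) 2)

lemma norm_entry_le_matOpNorm (i j : Fin N) : ‖B i j‖ ≤ matOpNorm B := by
  refine le_of_sq_le_sq ?_ (matOpNorm_nonneg B)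
  exact (Finset.single_le_sum (f := fun j => ‖B i j‖ ^ 2) (fun _ _ => by positivity)
    (Finset.mem_univ j)).trans (sum_sq_row_le B i)

/-- The matrix whose row `i₀` is constant equal to `1/√N`, the other rows being zero. -/
def hubMatrix (i₀ : Fin N) : Matrix (Fin N) (Fin N) ℂ :=
  Matrix.of fun i _ => if i = i₀ then ((Real.sqrt N : ℝ) : ℂ)⁻¹ else 0

lemma matOpNorm_hubMatrix_le (i₀ : Fin N) : matOpNorm (hubMatrix i₀) ≤ 1 := by
  have hN : 0 < (N : ℝ) := by exact_mod_cast i₀.pos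
  refine matOpNorm_le_of_mulVec _ zero_le_one fun x => ?_
  rw [Finset.sum_eq_single i₀]
  · have h1 : (hubMatrix i₀ *ᵥ x) i₀ = ((Real.sqrt N : ℝ) : ℂ)⁻¹ * ∑ j, x j := by
      simp [hubMatrix, Matrix.mulVec, dotProduct, Finset.mul_sum]
    rw [h1, norm_mul, mul_pow, norm_inv, Complex.norm_real, Real.norm_of_nonneg (by positivity),
      inv_pow, Real.sq_sqrt hN.le, one_pow, one_mul, inv_mul_le_iff₀ hN]
    calc ‖∑ j, x j‖ ^ 2 ≤ (∑ j, ‖x j‖) ^ 2 := by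
          gcongr
          exact norm_sum_le _ _
      _ ≤ N * ∑ j, ‖x j‖ ^ 2 := by
          simpa using sq_sum_le_card_mul_sum_sq (s := Finset.univ) (f := fun j => ‖x j‖)
  · intro i _ hi
    simp [hubMatrix, Matrix.mulVec, dotProduct, hi]
  · simp

end OpNorm

/-! ### Contractions as averages of products of bounded functions -/

section Riesz

variable {N : ℕ}

/-- The sign `±1` attached to a Boolean. -/
def signOf (b : Bool) : ℂ := if b then 1 else -1

lemma norm_signOf (b : Bool) : ‖signOf b‖ = 1 := by cases b <;> simp [signOf]

/-- The Riesz product `∏ (1 + i r_z b_z)`. -/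
def rieszProd (b : Fin N → ℝ) (r : Fin N → Bool) : ℂ :=
  ∏ z, (1 + Complex.I * signOf (r z) * (b z : ℂ))

lemma norm_rieszProd_le {b : Fin N → ℝ} (hb : ∑ z, b z ^ 2 ≤ 1) (r : Fin N → Bool) :
    ‖rieszProd b r‖ ≤ 2 := by
  have hfac : ∀ z, ‖1 + Complex.I * signOf (r z) * (b z : ℂ)‖ ^ 2 = 1 + b z ^ 2 := by
    intro z
    rw [← Complex.normSq_eq_norm_sq, Complex.normSq_apply]
    cases h : r z <;> simp [signOf] <;> ring
  have hsq : ‖rieszProd b r‖ ^ 2 ≤ 4 := by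
    rw [rieszProd, norm_prod, ← Finset.prod_pow]
    calc ∏ z, ‖1 + Complex.I * signOf (r z) * (b z : ℂ)‖ ^ 2
        = ∏ z, (1 + b z ^ 2) := Finset.prod_congr rfl fun z _ => hfac z
      _ ≤ ∏ z, Real.exp (b z ^ 2) := by
          refine Finset.prod_le_prod (fun z _ => by positivity) fun z _ => ?_
          rw [add_comm]
          exact Real.add_one_le_exp _
      _ = Real.exp (∑ z, b z ^ 2) := (Real.exp_sum _ _).symm
      _ ≤ Real.exp 1 := Real.exp_le_exp.mpr hb
      _ ≤ 4 := by linarith [Real.exp_one_lt_d9]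
  nlinarith [norm_nonneg (rieszProd b r)]

lemma sum_rieszProd_mul_signOf (b : Fin N → ℝ) (y : Fin N) :
    ∑ r : Fin N → Bool, rieszProd b r * signOf (r y) = 2 ^ N * (Complex.I * b y) := by
  have h1 : ∀ r : Fin N → Bool, rieszProd b r * signOf (r y) =
      ∏ z, ((1 + Complex.I * signOf (r z) * (b z : ℂ)) *
        (if z = y then signOf (r z) else 1)) := by
    intro r
    rw [Finset.prod_mul_distrib, rieszProd]
    simp
  have h2 := (Finset.prod_univ_sum (fun _ : Fin N => (Finset.univ : Finset Bool))
    (fun z β => (1 + Complex.I * signOf β * (b z : ℂ)) *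
      (if z = y then signOf β else 1))).symm
  rw [Fintype.piFinset_univ] at h2
  simp only [h1]
  rw [h2]
  have h3 : ∀ z, (∑ β : Bool, (1 + Complex.I * signOf β * (b z : ℂ)) *
      (if z = y then signOf β else 1)) = 2 * (if z = y then Complex.I * b y else 1) := by
    intro z
    by_cases hz : z = y
    · subst hz
      simp [signOf]
      ring
    · simp [signOf, hz]
      ring
  rw [Finset.prod_congr rfl fun z _ => h3 z, Finset.prod_mul_distrib]
  simp

/-- A matrix with rows in the unit ball of `ℓ²` is, up to a factor `4`, an average of products of
functions bounded by one. -/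
lemma exists_average_of_rows {B : Matrix (Fin N) (Fin N) ℂ}
    (hB : ∀ i, ∑ j, ‖B i j‖ ^ 2 ≤ 1) :
    ∃ u s : (Fin N → Bool) → Fin N → ℂ, (∀ r i, ‖u r i‖ ≤ 1) ∧ (∀ r i, ‖s r i‖ ≤ 1) ∧
      ∀ i j, B i j = 4 / 2 ^ N * ∑ r, u r i * s r j := by
  refine ⟨fun r i => (rieszProd (fun j => (B i j).re) r / Complex.I
      + rieszProd (fun j => (B i j).im) r) / 4, fun r i => signOf (r i), ?_,
      fun r i => (norm_signOf _).le, ?_⟩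
  · intro r i
    have hre : ∑ j, (B i j).re ^ 2 ≤ 1 := (Finset.sum_le_sum fun j _ => by
      rw [← sq_abs]; gcongr; exact Complex.abs_re_le_norm _).trans (hB i)
    have him : ∑ j, (B i j).im ^ 2 ≤ 1 := (Finset.sum_le_sum fun j _ => by
      rw [← sq_abs]; gcongr; exact Complex.abs_im_le_norm _).trans (hB i)
    have h1 := norm_rieszProd_le hre r
    have h2 := norm_rieszProd_le him r
    rw [norm_div]
    have h3 := norm_add_le (rieszProd (fun j => (B i j).re) r / Complex.I)
      (rieszProd (fun j => (B i j).im) r)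
    rw [norm_div, Complex.norm_I, div_one] at h3
    have h4 : ‖(4 : ℂ)‖ = 4 := by simp
    rw [h4, div_le_one (by norm_num)]
    linarith
  · intro i j
    have h1 := sum_rieszProd_mul_signOf (fun j => (B i j).re) j
    have h2 := sum_rieszProd_mul_signOf (fun j => (B i j).im) j
    have h3 : ∑ r : Fin N → Bool, (rieszProd (fun j => (B i j).re) r / Complex.I
      + rieszProd (fun j => (B i j).im) r) / 4 * signOf (r j) =
      (∑ r : Fin N → Bool, rieszProd (fun j => (B i j).re) r * signOf (r j)) / (4 * Complex.I)
      + (∑ r : Fin N → Bool, rieszProd (fun j => (B i j).im) r * signOf (r j)) / 4 := by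
      rw [Finset.sum_div, Finset.sum_div, ← Finset.sum_add_distrib]
      refine Finset.sum_congr rfl fun r _ => ?_
      field_simp
    rw [h3, h1, h2]
    have h5 : (2 : ℂ) ^ N ≠ 0 := pow_ne_zero _ two_ne_zero
    field_simp
    conv_lhs => rw [← Complex.re_add_im (B i j)]
    ring

end Riesz

/-! ### Sums over vertex labellings with a pinned root -/

section WeightBound

variable {V : Type} [Fintype V] {N : ℕ}

/-- Vertex labellings taking the value `i₀` outside of `T`. -/
def pinned (T : Finset V) (i₀ : Fin N) : Finset (V → Fin N) :=
  Finset.univ.filter fun φ => ∀ v, v ∉ T → φ v = i₀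

lemma mem_pinned {T : Finset V} {i₀ : Fin N} {φ : V → Fin N} :
    φ ∈ pinned T i₀ ↔ ∀ v, v ∉ T → φ v = i₀ := by simp [pinned]

/-- The weight `w`, summed over labellings pinned outside of `T`, defines a form bounded by `c`
on products of functions of the labels bounded by one. -/
def WeightBound (T : Finset V) (i₀ : Fin N) (w : (V → Fin N) → ℂ) (c : ℝ) : Prop :=
  ∀ x : V → Fin N → ℂ, (∀ v i, ‖x v i‖ ≤ 1) →
    ‖∑ φ ∈ pinned T i₀, w φ * ∏ v, x v (φ v)‖ ≤ c

variable {T : Finset V} {i₀ : Fin N} {w : (V → Fin N) → ℂ} {c : ℝ}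

lemma WeightBound.sum_le (h : WeightBound T i₀ w c) : ‖∑ φ ∈ pinned T i₀, w φ‖ ≤ c := by
  simpa using h (fun _ _ => 1) (by simp)

lemma weightBound_empty (i₀ : Fin N) : WeightBound (∅ : Finset V) i₀ (fun _ => 1) 1 := by
  intro x hx
  have : pinned (∅ : Finset V) i₀ = {fun _ => i₀} := by
    ext φ
    simp [mem_pinned, funext_iff]
  rw [this, Finset.sum_singleton, one_mul, norm_prod]
  exact Finset.prod_le_one (fun _ _ => norm_nonneg _) fun v _ => hx v _

lemma WeightBound.sub {w' : (V → Fin N) → ℂ} {c' : ℝ} (h : WeightBound T i₀ w c)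
    (h' : WeightBound T i₀ w' c') : WeightBound T i₀ (fun φ => w φ - w' φ) (c + c') := by
  intro x hx
  simp only [sub_mul, Finset.sum_sub_distrib]
  exact (norm_sub_le _ _).trans (add_le_add (h x hx) (h' x hx))

/-- Multiplying the weight by an entry of a contraction only costs a factor `4`. -/
lemma WeightBound.mul_entry (h : WeightBound T i₀ w c) (a b : V)
    {B : Matrix (Fin N) (Fin N) ℂ} (hB : matOpNorm B ≤ 1) :
    WeightBound T i₀ (fun φ => w φ * B (φ a) (φ b)) (4 * c) := by
  obtain ⟨u, s, hu, hs, hBu⟩ := exists_average_of_rows (B := B) fun i =>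
    (sum_sq_row_le B i).trans (pow_le_one₀ (matOpNorm_nonneg B) hB)
  intro x hx
  set x' : (Fin N → Bool) → V → Fin N → ℂ := fun r v i =>
    x v i * (if v = a then u r i else 1) * (if v = b then s r i else 1) with hx'
  have hx'1 : ∀ r v i, ‖x' r v i‖ ≤ 1 := by
    intro r v i
    simp only [hx', norm_mul]
    refine mul_le_one₀ (mul_le_one₀ (hx v i) (norm_nonneg _) ?_) (norm_nonneg _) ?_
    · split_ifs
      · exact hu r i
      · simp
    · split_ifs
      · exact hs r i
      · simp
  have hprod : ∀ r (φ : V → Fin N), ∏ v, x' r v (φ v) =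
      (∏ v, x v (φ v)) * (u r (φ a) * s r (φ b)) := by
    intro r φ
    simp only [hx', Finset.prod_mul_distrib]
    simp [mul_assoc]
  have hsum : ∑ φ ∈ pinned T i₀, w φ * B (φ a) (φ b) * ∏ v, x v (φ v) =
      4 / 2 ^ N * ∑ r, ∑ φ ∈ pinned T i₀, w φ * ∏ v, x' r v (φ v) := by
    rw [Finset.sum_comm, Finset.mul_sum]
    refine Finset.sum_congr rfl fun φ _ => ?_
    simp only [hprod]
    rw [hBu, ← Finset.mul_sum, ← Finset.mul_sum]
    ring
  rw [hsum, norm_mul]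
  have h1 : ‖∑ r, ∑ φ ∈ pinned T i₀, w φ * ∏ v, x' r v (φ v)‖ ≤ 2 ^ N * c := by
    refine (norm_sum_le _ _).trans ((Finset.sum_le_sum fun r _ => h (x' r) (hx'1 r)).trans ?_)
    simp
  have h2 : ‖(4 / 2 ^ N : ℂ)‖ = 4 / 2 ^ N := by simp
  rw [h2]
  calc (4 / 2 ^ N : ℝ) * _ ≤ 4 / 2 ^ N * (2 ^ N * c) := by gcongr
    _ = 4 * c := by field_simp

lemma sum_pinned_insert {z : V} (hz : z ∉ T) (f : (V → Fin N) → ℂ) :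
    ∑ φ ∈ pinned (insert z T) i₀, f φ =
      ∑ φ ∈ pinned T i₀, ∑ y, f (Function.update φ z y) := by
  rw [← Finset.sum_product']
  refine Finset.sum_nbij' (fun φ => (Function.update φ z i₀, φ z))
    (fun p => Function.update p.1 z p.2) ?_ ?_ ?_ ?_ ?_
  · intro φ hφ
    rw [mem_pinned] at hφ
    simp only [Finset.mem_product, mem_pinned, Finset.mem_univ, and_true]
    intro v hv
    by_cases hvz : v = z
    · simp [hvz]
    · simpa [hvz] using hφ v (by simp [hvz, hv])
  · intro p hp
    simp only [Finset.mem_product, mem_pinned, Finset.mem_univ, and_true] at hp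
    rw [mem_pinned]
    intro v hv
    simp only [Finset.mem_insert, not_or] at hv
    simpa [hv.1] using hp v hv.2
  · intro φ _
    simp
  · rintro ⟨φ, y⟩ hp
    simp only [Finset.mem_product, mem_pinned, Finset.mem_univ, and_true] at hp
    have := hp z hz
    simp [← this]
  · intro φ _
    simp

/-- Subdividing an edge by a new vertex. -/
lemma WeightBound.subdivide {z s z' : V} (hz' : z' ∉ T) (hz : z ≠ z') (hs : s ≠ z')
    (hw : ∀ φ y, w (Function.update φ z' y) = w φ)
    (h : ∀ M : Matrix (Fin N) (Fin N) ℂ, matOpNorm M ≤ 1 →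
      WeightBound T i₀ (fun φ => w φ * M (φ z) (φ s)) c)
    {B M : Matrix (Fin N) (Fin N) ℂ} (hB : matOpNorm B ≤ 1) (hM : matOpNorm M ≤ 1) :
    WeightBound (insert z' T) i₀ (fun φ => w φ * B (φ z) (φ z') * M (φ z') (φ s)) c := by
  intro x hx
  rw [sum_pinned_insert hz']
  set M' := B * Matrix.diagonal (x z') * M with hM'
  have hM'1 : matOpNorm M' ≤ 1 := by
    refine (matOpNorm_mul_le _ _).trans (mul_le_one₀ ((matOpNorm_mul_le _ _).trans
      (mul_le_one₀ hB (matOpNorm_nonneg _) (matOpNorm_diagonal_le _ (hx z'))))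
      (matOpNorm_nonneg _) hM)
  convert h M' hM'1 (Function.update x z' fun _ => 1) ?_ using 2
  · refine Finset.sum_congr rfl fun φ _ => ?_
    have hprod : ∀ y, ∏ v, x v (Function.update φ z' y v) =
        x z' y * ∏ v, Function.update x z' (fun _ => 1) v (φ v) := by
      intro y
      rw [← Finset.mul_prod_erase _ _ (Finset.mem_univ z'),
        ← Finset.mul_prod_erase _ (fun v => Function.update x z' (fun _ => 1) v (φ v))
          (Finset.mem_univ z')]
      simp only [Function.update_self, one_mul]
      congr 1
      refine Finset.prod_congr rfl fun v hv => ?_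
      have := Finset.ne_of_mem_erase hv
      simp [this]
    simp only [hw, hprod, Function.update_self, Function.update_of_ne hz,
      Function.update_of_ne hs, hM', Matrix.mul_apply (N := M), Matrix.mul_diagonal]
    rw [Finset.mul_sum, Finset.sum_mul]
    refine Finset.sum_congr rfl fun y _ => ?_
    ring
  · intro v i
    by_cases hv : v = z'
    · subst hv
      simp
    · simpa [hv] using hx v i

/-- Multiplying the weight by the indicators of finitely many inequalities of labels. -/
lemma WeightBound.mul_ne (h : WeightBound T i₀ w c) (P : Finset (V × V)) :
    WeightBound T i₀
      (fun φ => w φ * ∏ p ∈ P, (1 - (1 : Matrix (Fin N) (Fin N) ℂ) (φ p.1) (φ p.2)))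
      (5 ^ P.card * c) := by
  induction P using Finset.induction_on with
  | empty => simpa using h
  | insert p P hp ih =>
    convert ih.sub (ih.mul_entry p.1 p.2 matOpNorm_one_le) using 1
    · funext φ
      rw [Finset.prod_insert hp]
      ring
    · rw [Finset.card_insert_of_notMem hp]
      ring

end WeightBound

section Bridgeless

variable {V E : Type} {N : ℕ} {src tgt : E → V}

/-- The weight of a labelling restricted to a set of edges. -/
def edgeWeight (src tgt : E → V) (B : E → Matrix (Fin N) (Fin N) ℂ) (F : Finset E)
    (φ : V → Fin N) : ℂ :=
  ∏ e ∈ F, B e (φ (tgt e)) (φ (src e))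

lemma edgeWeight_update {B : E → Matrix (Fin N) (Fin N) ℂ} {F : Finset E} {z : V}
    (hF : ∀ e ∈ F, src e ≠ z ∧ tgt e ≠ z) (φ : V → Fin N) (y : Fin N) :
    edgeWeight src tgt B F (Function.update φ z y) = edgeWeight src tgt B F φ := by
  refine Finset.prod_congr rfl fun e he => ?_
  rw [Function.update_of_ne (hF e he).1, Function.update_of_ne (hF e he).2]

variable [Fintype V]

lemma WeightBound.mono {T : Finset V} {i₀ : Fin N} {w : (V → Fin N) → ℂ} {c c' : ℝ}
    (h : WeightBound T i₀ w c) (hc : c ≤ c') : WeightBound T i₀ w c' :=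
  fun x hx => (h x hx).trans hc

lemma WeightBound.edgeWeight_union {B : E → Matrix (Fin N) (Fin N) ℂ}
    (hB : ∀ e, matOpNorm (B e) ≤ 1) {T : Finset V} {i₀ : Fin N} {F : Finset E}
    (h : WeightBound T i₀ (edgeWeight src tgt B F) (4 ^ F.card)) (D : Finset E) :
    WeightBound T i₀ (edgeWeight src tgt B (D ∪ F)) (4 ^ (D ∪ F).card) := by
  induction D using Finset.induction_on with
  | empty => simpa using h
  | insert f D _ ih =>
    rw [Finset.insert_union]
    by_cases hf : f ∈ D ∪ F
    · rwa [Finset.insert_eq_of_mem hf]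
    · convert ih.mul_entry (tgt f) (src f) (hB f) using 1
      · funext φ
        rw [edgeWeight, Finset.prod_insert hf, mul_comm]
        rfl
      · rw [Finset.card_insert_of_notMem hf]
        ring

/-- A partially constructed ear: the edges `F` between free vertices `T` and the root `h`, closed
up by a virtual edge from `z` to `s`, have a bounded weight. -/
structure EarState (src tgt : E → V) (B : E → Matrix (Fin N) (Fin N) ℂ) (i₀ : Fin N) (h s : V)
    (e : E) (S T : Finset V) (F : Finset E) (z : V) : Prop where
  subset : S ⊆ T
  root_notMem : h ∉ T
  ends : ∀ f ∈ F, src f ∈ insert h T ∧ tgt f ∈ insert h T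
  edge_notMem : e ∉ F
  mem : z ∈ insert h T
  bound : ∀ M : Matrix (Fin N) (Fin N) ℂ, matOpNorm M ≤ 1 →
    WeightBound T i₀ (fun φ => edgeWeight src tgt B F φ * M (φ z) (φ s)) (4 ^ (F.card + 1))

lemma EarState.extend {B : E → Matrix (Fin N) (Fin N) ℂ} (hB : ∀ e, matOpNorm (B e) ≤ 1)
    {i₀ : Fin N} {h s : V} {e : E} {S T : Finset V} {F : Finset E} {z z' : V}
    (hJ : EarState src tgt B i₀ h s e S T F z) (hs : s ∈ insert h S) (hz' : z' ∉ insert h T)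
    {f : E} (hfe : f ≠ e) (hf : (src f = z ∧ tgt f = z') ∨ (src f = z' ∧ tgt f = z)) :
    EarState src tgt B i₀ h s e S (insert z' T) (insert f F) z' := by
  have hfF : f ∉ F := by
    intro hfF
    rcases hf with ⟨_, h2⟩ | ⟨h1, _⟩
    · exact hz' (h2 ▸ (hJ.ends f hfF).2)
    · exact hz' (h1 ▸ (hJ.ends f hfF).1)
  have hsub : insert h T ⊆ insert h (insert z' T) :=
    Finset.insert_subset_insert _ (Finset.subset_insert _ _)
  have hz'T : z' ∉ T := fun hh => hz' (Finset.mem_insert_of_mem hh)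
  have hz : z ≠ z' := fun hh => hz' (hh ▸ hJ.mem)
  have hsz : s ≠ z' := fun hh =>
    hz' (hh ▸ Finset.insert_subset_insert _ hJ.subset hs)
  have hmem : z' ∈ insert h (insert z' T) := by simp
  refine ⟨hJ.subset.trans (Finset.subset_insert _ _), ?_, ?_, ?_, hmem, ?_⟩
  · simp only [Finset.mem_insert, not_or]
    exact ⟨fun hh => hz' (by simp [hh]), hJ.root_notMem⟩
  · intro f' hf'
    rcases Finset.mem_insert.mp hf' with rfl | hf'
    · rcases hf with ⟨h1, h2⟩ | ⟨h1, h2⟩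
      · exact ⟨h1 ▸ hsub hJ.mem, h2 ▸ hmem⟩
      · exact ⟨h1 ▸ hmem, h2 ▸ hsub hJ.mem⟩
    · exact ⟨hsub (hJ.ends f' hf').1, hsub (hJ.ends f' hf').2⟩
  · simp only [Finset.mem_insert, not_or]
    exact ⟨hfe.symm, hJ.edge_notMem⟩
  · intro M hM
    have hw : ∀ φ y, edgeWeight src tgt B F (Function.update φ z' y) =
        edgeWeight src tgt B F φ := edgeWeight_update fun f' hf' =>
      ⟨fun hh => hz' (hh ▸ (hJ.ends f' hf').1), fun hh => hz' (hh ▸ (hJ.ends f' hf').2)⟩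
    have hc : (4 : ℝ) ^ (F.card + 1) ≤ 4 ^ ((insert f F).card + 1) :=
      pow_le_pow_right₀ (by norm_num) (by simp [Finset.card_insert_of_notMem hfF])
    rcases hf with ⟨h1, h2⟩ | ⟨h1, h2⟩
    · have := WeightBound.subdivide hz'T hz hsz hw hJ.bound
        ((matOpNorm_transpose_le (B f)).trans (hB f)) hM
      convert this.mono hc using 1
      funext φ
      rw [edgeWeight, Finset.prod_insert hfF, h1, h2, Matrix.transpose_apply,
        mul_comm (B f _ _)]
      rfl
    · have := WeightBound.subdivide hz'T hz hsz hw hJ.bound (hB f) hM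
      convert this.mono hc using 1
      funext φ
      rw [edgeWeight, Finset.prod_insert hfF, h1, h2, mul_comm (B f _ _)]
      rfl

lemma exists_earState {B : E → Matrix (Fin N) (Fin N) ℂ} (hB : ∀ e, matOpNorm (B e) ≤ 1)
    {i₀ : Fin N} {h s : V} {e : E} {S : Finset V} {F : Finset E} (hh : h ∉ S)
    (hF : ∀ f ∈ F, src f ∈ insert h S ∧ tgt f ∈ insert h S) (he : e ∉ F)
    (hs : s ∈ insert h S)
    (hbd : WeightBound S i₀ (edgeWeight src tgt B F) (4 ^ F.card)) {z : V}
    (hz : reachOn src tgt {e} s z) :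
    ∃ T F', EarState src tgt B i₀ h s e S T F' z := by
  suffices H : ∃ U : Finset V, z ∈ U ∧ ∀ z' ∈ U, ∃ T F',
      EarState src tgt B i₀ h s e S T F' z' ∧ insert h T ⊆ U by
    obtain ⟨U, hzU, hU⟩ := H
    obtain ⟨T, F', hJ, _⟩ := hU z hzU
    exact ⟨T, F', hJ⟩
  induction hz with
  | refl =>
    refine ⟨insert h S, hs, fun z' hz' => ⟨S, F, ⟨subset_rfl, hh, hF, he, hz', ?_⟩, subset_rfl⟩⟩
    intro M hM
    convert hbd.mul_entry z' s hM using 1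
    ring
  | @tail z z' _ hstep ih =>
    obtain ⟨U, hzU, hU⟩ := ih
    by_cases hz'U : z' ∈ U
    · exact ⟨U, hz'U, hU⟩
    obtain ⟨f, hfe, hf⟩ := hstep
    obtain ⟨T, F', hJ, hTU⟩ := hU z hzU
    have hext := hJ.extend hB hs (fun hmem => hz'U (hTU hmem)) hfe hf
    refine ⟨insert z' U, by simp, fun x hx => ?_⟩
    rcases Finset.mem_insert.mp hx with rfl | hx
    · refine ⟨_, _, hext, ?_⟩
      rw [Finset.insert_comm]
      exact Finset.insert_subset_insert _ hTU
    · obtain ⟨T', F'', hJ', hT'⟩ := hU x hx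
      exact ⟨T', F'', hJ', hT'.trans (Finset.subset_insert _ _)⟩

/-- In a connected graph without cut edges, the sum over the labellings with a fixed label at the
root of a product of entries of contractions is bounded independently of the dimension. -/
theorem weightBound_of_bridgeless [Fintype E] {B : E → Matrix (Fin N) (Fin N) ℂ}
    (hB : ∀ e, matOpNorm (B e) ≤ 1) (i₀ : Fin N) (h : V)
    (hconn : ∀ v, reachOn src tgt ∅ h v) (hbr : ∀ e, ¬ IsCutEdge src tgt e) :
    WeightBound (Finset.univ.erase h) i₀ (edgeWeight src tgt B Finset.univ)
      (4 ^ Fintype.card E) := by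
  let good : Finset V → Prop := fun S => h ∉ S ∧ ∃ F : Finset E,
    (∀ f ∈ F, src f ∈ insert h S ∧ tgt f ∈ insert h S) ∧
    WeightBound S i₀ (edgeWeight src tgt B F) (4 ^ F.card)
  have hempty : good ∅ := by
    refine ⟨by simp, ∅, by simp, ?_⟩
    simpa [edgeWeight, WeightBound] using weightBound_empty (V := V) i₀
  obtain ⟨S, hS, hmax⟩ := Finset.exists_max_image (Finset.univ.filter good) Finset.card
    ⟨∅, by simpa using hempty⟩
  simp only [Finset.mem_filter, Finset.mem_univ, true_and] at hS hmax
  obtain ⟨hhS, F, hF, hbd⟩ := hS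
  have hall : ∀ v, v ∈ insert h S := by
    by_contra! hex
    obtain ⟨v, hv⟩ := hex
    have hcross : ∃ a b, a ∈ insert h S ∧ b ∉ insert h S ∧ adjOn src tgt ∅ a b := by
      by_contra! hno
      have : ∀ b, reachOn src tgt ∅ h b → b ∈ insert h S := by
        intro b hb
        induction hb with
        | refl => simp
        | tail _ hstep ih =>
          by_contra hc
          exact hno _ _ ih hc hstep
      exact hv (this v (hconn v))
    obtain ⟨s, x, hs, hx, e, _, he⟩ := hcross
    have heF : e ∉ F := by
      intro heF
      rcases he with ⟨_, h2⟩ | ⟨h1, _⟩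
      · exact hx (h2 ▸ (hF e heF).2)
      · exact hx (h1 ▸ (hF e heF).1)
    have hreach : reachOn src tgt {e} s x := by
      have := not_not.mp (hbr e)
      rcases he with ⟨rfl, rfl⟩ | ⟨rfl, rfl⟩
      · exact this
      · exact reachOn_symm this
    obtain ⟨T, F', hJ⟩ := exists_earState hB hhS hF heF hs hbd hreach
    have hxS : x ∉ S := fun hh => hx (Finset.mem_insert_of_mem hh)
    have hxT : x ∈ T := by
      rcases Finset.mem_insert.mp hJ.mem with rfl | hmem
      · simp at hx
      · exact hmem
    have hsT : s ∈ insert h T := Finset.insert_subset_insert _ hJ.subset hs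
    have hgood : good T := by
      refine ⟨hJ.root_notMem, insert e F', ?_, ?_⟩
      · intro f hf
        rcases Finset.mem_insert.mp hf with rfl | hf
        · rcases he with ⟨rfl, rfl⟩ | ⟨rfl, rfl⟩
          · exact ⟨hsT, hJ.mem⟩
          · exact ⟨hJ.mem, hsT⟩
        · exact hJ.ends f hf
      · rw [Finset.card_insert_of_notMem hJ.edge_notMem]
        rcases he with ⟨h1, h2⟩ | ⟨h1, h2⟩
        · convert hJ.bound (B e) (hB e) using 1
          funext φ
          rw [edgeWeight, Finset.prod_insert hJ.edge_notMem, h1, h2, mul_comm]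
          rfl
        · convert hJ.bound (B e)ᵀ ((matOpNorm_transpose_le (B e)).trans (hB e)) using 1
          funext φ
          rw [edgeWeight, Finset.prod_insert hJ.edge_notMem, h1, h2, mul_comm]
          rfl
    have hlt : S.card < T.card := Finset.card_lt_card
      ⟨hJ.subset, fun hTS => hxS (hTS hxT)⟩
    exact absurd (hmax T hgood) (not_le.mpr hlt)
  have hSe : S = Finset.univ.erase h := by
    ext v
    by_cases hv : v = h
    · simp [hv, hhS]
    · simpa [hv] using hall v
  have := hbd.edgeWeight_union hB Finset.univ
  rwa [Finset.union_eq_left.mpr (Finset.subset_univ _), Finset.card_univ, hSe] at this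

end Bridgeless

/-! ### The graph of coloured components -/

section Colored

variable {W E : Type} {L : ℕ} (src tgt : E → W) (col : E → Fin L)

/-- The connected components of the subgraph formed by the edges of colour `ℓ`. -/
abbrev ColorComp (ℓ : Fin L) : Type := Quotient (connSetoid src tgt {e | col e ≠ ℓ})

/-- The component of colour `ℓ` containing `w`. -/
def colorComp (ℓ : Fin L) (w : W) : ColorComp src tgt col ℓ := Quotient.mk _ w

/-- The nodes of the graph of coloured components: vertices and coloured components. -/
abbrev CompNode : Type := W ⊕ (Σ ℓ, ColorComp src tgt col ℓ)

/-- Each pair `(w, ℓ)` is an edge of the graph of coloured components, starting at `w`. -/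
def compSrc (p : W × Fin L) : CompNode src tgt col := Sum.inl p.1

/-- Each pair `(w, ℓ)` is an edge of the graph of coloured components, ending at the component
of colour `ℓ` of `w`. -/
def compTgt (p : W × Fin L) : CompNode src tgt col := Sum.inr ⟨p.2, colorComp src tgt col p.2 p.1⟩

/-- The edges of the graph of coloured components which are not cut edges. -/
def Live (w : W) (ℓ : Fin L) : Prop :=
  ¬ IsCutEdge (compSrc src tgt col) (compTgt src tgt col) (w, ℓ)

/-- A coloured component is dead if all its edges in the graph of coloured components are cut
edges. -/
def Dead (ℓ : Fin L) (C : ColorComp src tgt col ℓ) : Prop :=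
  ∀ w, colorComp src tgt col ℓ w = C → ¬ Live src tgt col w ℓ

variable {src tgt col}

lemma colorComp_eq {ℓ : Fin L} {a b : W} :
    colorComp src tgt col ℓ a = colorComp src tgt col ℓ b ↔
      reachOn src tgt {e | col e ≠ ℓ} a b :=
  ⟨fun h => Quotient.exact h, fun h => Quotient.sound h⟩

lemma compTgt_eq {a b : W} {ℓ ℓ' : Fin L} :
    compTgt src tgt col (a, ℓ) = compTgt src tgt col (b, ℓ') ↔
      ℓ = ℓ' ∧ reachOn src tgt {e | col e ≠ ℓ} a b := by
  constructor
  · intro h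
    have h' := Sum.inr.inj h
    obtain ⟨h1, h2⟩ := Sigma.mk.inj_iff.mp h'
    dsimp only at h1 h2
    subst h1
    exact ⟨rfl, colorComp_eq.mp (eq_of_heq h2)⟩
  · rintro ⟨rfl, h⟩
    simp only [compTgt, colorComp_eq.mpr h]

lemma compReach_connected (hconn : IsConnectedGraph src tgt) :
    IsConnectedGraph (compSrc src tgt col) (compTgt src tgt col) := by
  have hin : ∀ a b : W, reachOn (compSrc src tgt col) (compTgt src tgt col) ∅
      (Sum.inl a) (Sum.inl b) := by
    intro a b
    refine reachOn_lift (F := ∅) (src := src) (tgt := tgt) Sum.inl ?_ (hconn a b)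
    intro e _
    have h1 : reachOn (compSrc src tgt col) (compTgt src tgt col) ∅
        (Sum.inl (src e)) (compTgt src tgt col (src e, col e)) :=
      reachOn_of_edge (e := (src e, col e)) (by simp)
    have h2 : reachOn (compSrc src tgt col) (compTgt src tgt col) ∅
        (compTgt src tgt col (tgt e, col e)) (Sum.inl (tgt e)) :=
      reachOn_of_edge_symm (e := (tgt e, col e)) (by simp)
    have h3 : compTgt src tgt col (src e, col e) = compTgt src tgt col (tgt e, col e) :=
      compTgt_eq.mpr ⟨rfl, reachOn_of_edge (by simp)⟩
    rw [← h3] at h2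
    exact h1.trans h2
  have hto : ∀ x : CompNode src tgt col, ∃ a : W,
      reachOn (compSrc src tgt col) (compTgt src tgt col) ∅ x (Sum.inl a) := by
    rintro (a | ⟨ℓ, ⟨a⟩⟩)
    · exact ⟨a, .refl⟩
    · exact ⟨a, reachOn_of_edge_symm (e := (a, ℓ)) (by simp)⟩
  intro x y
  obtain ⟨a, ha⟩ := hto x
  obtain ⟨b, hb⟩ := hto y
  exact (ha.trans (hin a b)).trans (reachOn_symm hb)

lemma Live.exists_color_ne [Finite W] {w : W} {ℓ : Fin L} (h : Live src tgt col w ℓ) :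
    ∃ ℓ', ℓ' ≠ ℓ ∧ Live src tgt col w ℓ' := by
  have hr := reachOn_union_cutEdges h
  rcases Relation.ReflTransGen.cases_head hr with h0 | ⟨x, ⟨⟨w', ℓ'⟩, he, ⟨h1, -⟩ | ⟨-, h1⟩⟩, -⟩
  · simp [compSrc, compTgt] at h0
  · have hw : w' = w := Sum.inl.inj h1
    subst hw
    simp only [Set.mem_insert_iff, not_or, Prod.mk.injEq, true_and] at he
    exact ⟨ℓ', he.1, he.2⟩
  · simp [compSrc, compTgt] at h1

lemma Live.exists_vertex_ne [Finite W] {w : W} {ℓ : Fin L} (h : Live src tgt col w ℓ) :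
    ∃ w', w' ≠ w ∧ reachOn src tgt {e | col e ≠ ℓ} w w' ∧ Live src tgt col w' ℓ := by
  have hr := reachOn_union_cutEdges h
  rcases Relation.ReflTransGen.cases_tail hr with h0 | ⟨x, -, ⟨⟨w', ℓ'⟩, he, ⟨-, h1⟩ | ⟨h1, -⟩⟩⟩
  · simp [compSrc, compTgt] at h0
  · obtain ⟨h2, h3⟩ := compTgt_eq.mp h1
    subst h2
    simp only [Set.mem_insert_iff, not_or, Prod.mk.injEq, and_true] at he
    exact ⟨w', he.1, reachOn_symm h3, he.2⟩
  · simp [compSrc, compTgt] at h1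

variable (src tgt col)

/-- Attachments of the subgraph of colour `ℓ` to an additional hub: one for each live edge, and
two for each dead component. -/
abbrev HubEdge (ℓ : Fin L) : Type :=
  {w : W // Live src tgt col w ℓ} ⊕ ({C : ColorComp src tgt col ℓ // Dead src tgt col ℓ C} × Bool)

variable {src tgt col}

lemma dead_add_dead_le [Fintype W] (hconn : IsConnectedGraph src tgt) {w₀ : W} {ℓ₀ : Fin L}
    (h₀ : Live src tgt col w₀ ℓ₀) :
    Fintype.card {w : W // ∀ ℓ, ¬ Live src tgt col w ℓ} +
      Fintype.card {C : Σ ℓ, ColorComp src tgt col ℓ // Dead src tgt col C.1 C.2} ≤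
    Fintype.card {p : W × Fin L // ¬ Live src tgt col p.1 p.2} := by
  set D := cutEdges (compSrc src tgt col) (compTgt src tgt col) with hD
  have hle := ncompAvoiding_le (compReach_connected (col := col) hconn) D
  have hDc : D.ncard = Fintype.card {p : W × Fin L // ¬ Live src tgt col p.1 p.2} := by
    rw [← Nat.card_coe_set_eq, Nat.card_eq_fintype_card]
    refine Fintype.card_congr (Equiv.subtypeEquivRight fun p => ?_)
    simp [hD, cutEdges, Live]
  have hiso : ∀ x y : CompNode src tgt col,
      (∀ p : W × Fin L, p ∉ D → compSrc src tgt col p ≠ x ∧ compTgt src tgt col p ≠ x) →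
      reachOn (compSrc src tgt col) (compTgt src tgt col) D x y → x = y := by
    intro x y hx h
    rcases Relation.ReflTransGen.cases_head h with h0 | ⟨z, ⟨e, he, ⟨h1, -⟩ | ⟨-, h1⟩⟩, -⟩
    · exact h0
    · exact absurd h1 (hx e he).1
    · exact absurd h1 (hx e he).2
  let f : Option ({w : W // ∀ ℓ, ¬ Live src tgt col w ℓ} ⊕
      {C : Σ ℓ, ColorComp src tgt col ℓ // Dead src tgt col C.1 C.2}) → CompNode src tgt col :=
    fun o => match o with
      | none => Sum.inl w₀
      | some (Sum.inl w) => Sum.inl w.1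
      | some (Sum.inr C) => Sum.inr C.1
  have hf : Function.Injective f := by
    rintro (_ | w | C) (_ | w' | C') h
    · rfl
    · exact absurd (Sum.inl.inj h ▸ h₀) (w'.2 ℓ₀)
    · simp [f] at h
    · exact absurd (Sum.inl.inj h ▸ h₀) (w.2 ℓ₀)
    · rw [Subtype.ext (Sum.inl.inj h)]
    · simp [f] at h
    · simp [f] at h
    · simp [f] at h
    · rw [Subtype.ext (Sum.inr.inj h)]
  have hfiso : ∀ o, ∀ p : W × Fin L, p ∉ D →
      compSrc src tgt col p ≠ f (some o) ∧ compTgt src tgt col p ≠ f (some o) := by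
    rintro (w | C) ⟨v, ℓ⟩ hp
    · refine ⟨fun h => ?_, by simp [compTgt, f]⟩
      have hv : v = w.1 := Sum.inl.inj h
      exact hp (by_contra fun h' => w.2 ℓ (hv ▸ h'))
    · refine ⟨by simp [compSrc, f], fun h => ?_⟩
      obtain ⟨⟨ℓ', C⟩, hC⟩ := C
      have h' := Sum.inr.inj h
      obtain ⟨h1, h2⟩ := Sigma.mk.inj_iff.mp h'
      dsimp only at h1 h2
      subst h1
      exact hp (by_contra fun h'' => hC v (eq_of_heq h2) h'')
  have hinj : Function.Injective fun o =>
      Quotient.mk (connSetoid (compSrc src tgt col) (compTgt src tgt col) D) (f o) := by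
    intro o o' h
    have h' : reachOn (compSrc src tgt col) (compTgt src tgt col) D (f o) (f o') :=
      Quotient.exact h
    rcases o with _ | o
    · rcases o' with _ | o'
      · rfl
      · exact hf (hiso _ _ (hfiso o') (reachOn_symm h')).symm
    · exact hf (hiso _ _ (hfiso o) h')
  have hcard := Nat.card_le_card_of_injective _ hinj
  rw [Nat.card_eq_fintype_card, Fintype.card_option, Fintype.card_sum] at hcard
  have : Nat.card (Quotient (connSetoid (compSrc src tgt col) (compTgt src tgt col) D)) =
    ncompAvoiding (compSrc src tgt col) (compTgt src tgt col) D := rfl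
  omega

/-- The number of attachments to the hubs is controlled as soon as there is a live edge. -/
lemma sum_card_hubEdge_le [Fintype W] (hconn : IsConnectedGraph src tgt) {w₀ : W} {ℓ₀ : Fin L}
    (h₀ : Live src tgt col w₀ ℓ₀) :
    ∑ ℓ, Fintype.card (HubEdge src tgt col ℓ) + 2 * Fintype.card W ≤
      2 * (L * Fintype.card W) := by
  have h1 := dead_add_dead_le hconn h₀
  have hsum : ∑ ℓ, Fintype.card (HubEdge src tgt col ℓ) =
      Fintype.card {p : W × Fin L // Live src tgt col p.1 p.2} +
        2 * Fintype.card {C : Σ ℓ, ColorComp src tgt col ℓ // Dead src tgt col C.1 C.2} := by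
    have e1 : Fintype.card {p : W × Fin L // Live src tgt col p.1 p.2} =
        ∑ ℓ, Fintype.card {w : W // Live src tgt col w ℓ} := by
      rw [← Fintype.card_sigma]
      exact Fintype.card_congr
        ⟨fun p => ⟨p.1.2, p.1.1, p.2⟩, fun s => ⟨(s.2.1, s.1), s.2.2⟩, fun _ => rfl, fun _ => rfl⟩
    have e2 : Fintype.card {C : Σ ℓ, ColorComp src tgt col ℓ // Dead src tgt col C.1 C.2} =
        ∑ ℓ, Fintype.card {C : ColorComp src tgt col ℓ // Dead src tgt col ℓ C} := by
      rw [← Fintype.card_sigma]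
      exact Fintype.card_congr
        ⟨fun p => ⟨p.1.1, p.1.2, p.2⟩, fun s => ⟨⟨s.1, s.2.1⟩, s.2.2⟩, fun _ => rfl, fun _ => rfl⟩
    rw [e1, e2, Finset.mul_sum, ← Finset.sum_add_distrib]
    refine Finset.sum_congr rfl fun ℓ _ => ?_
    rw [Fintype.card_sum, Fintype.card_prod, Fintype.card_bool, mul_comm]
  have h2 : 2 * Fintype.card {w : W // ¬ ∀ ℓ, ¬ Live src tgt col w ℓ} ≤
      Fintype.card {p : W × Fin L // Live src tgt col p.1 p.2} := by
    have hch : ∀ w : {w : W // ¬ ∀ ℓ, ¬ Live src tgt col w ℓ}, ∃ ℓ ℓ',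
        ℓ' ≠ ℓ ∧ Live src tgt col w ℓ ∧ Live src tgt col w ℓ' := by
      intro w
      obtain ⟨ℓ, hℓ⟩ := not_forall.mp w.2
      obtain ⟨ℓ', hne, hℓ'⟩ := (not_not.mp hℓ).exists_color_ne
      exact ⟨ℓ, ℓ', hne, not_not.mp hℓ, hℓ'⟩
    choose c c' hne hc hc' using hch
    rw [mul_comm, ← Fintype.card_bool, ← Fintype.card_prod]
    refine Fintype.card_le_of_injective
      (fun q => if q.2 then ⟨(q.1.1, c q.1), hc q.1⟩ else ⟨(q.1.1, c' q.1), hc' q.1⟩) ?_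
    rintro ⟨w, b⟩ ⟨v, b'⟩ h
    have hw : w = v := by
      cases b <;> cases b' <;> simp at h <;> exact Subtype.ext h.1
    subst hw
    cases b <;> cases b' <;> simp at h ⊢
    · exact hne w h
    · exact hne w h.symm
  have h3 := Fintype.card_subtype_compl fun w : W => ∀ ℓ, ¬ Live src tgt col w ℓ
  have h3' := Fintype.card_subtype_le fun w : W => ∀ ℓ, ¬ Live src tgt col w ℓ
  have h4 := Fintype.card_subtype_compl fun p : W × Fin L => Live src tgt col p.1 p.2
  have h4' := Fintype.card_subtype_le fun p : W × Fin L => Live src tgt col p.1 p.2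
  rw [Fintype.card_prod, Fintype.card_fin, mul_comm] at h4 h4'
  omega

end Colored

section Hub

variable {W E : Type} {L : ℕ} {src tgt : E → W} {col : E → Fin L}

/-- In a bridgeless graph, if the endpoints of an edge `e` of colour `ℓ` get disconnected in the
subgraph of colour `ℓ` by deleting `e`, then each side contains a live vertex. -/
lemma exists_live_of_not_reachOn {e : E} {ℓ : Fin L} {a b : W}
    (hab : reachOn src tgt {e | col e ≠ ℓ} a b) (hbr : reachOn src tgt {e} a b)
    (hR : ¬ reachOn src tgt (insert e {e | col e ≠ ℓ}) a b) :
    ∃ w, reachOn src tgt (insert e {e | col e ≠ ℓ}) a w ∧ Live src tgt col w ℓ := by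
  set R := reachOn src tgt (insert e {e | col e ≠ ℓ}) with hRdef
  set S : Set (W × Fin L) := {p | p.2 = ℓ ∧ R a p.1} with hS
  have step : ∀ x m, (x, m) ∉ S →
      reachOn (compSrc src tgt col) (compTgt src tgt col) S (Sum.inl x)
        (compTgt src tgt col (x, m)) := fun x m h => reachOn_of_edge (e := (x, m)) h
  have main : ∀ x, reachOn src tgt {e} x b → (∃ w, R a w ∧ Live src tgt col w ℓ) ∨
      (¬ R a x ∧ reachOn (compSrc src tgt col) (compTgt src tgt col) S (Sum.inl x)
        (compTgt src tgt col (b, ℓ))) := by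
    intro x hx
    induction hx using Relation.ReflTransGen.head_induction_on with
    | refl => exact Or.inr ⟨hR, step b ℓ fun h => hR h.2⟩
    | @head x y hxy _ ih =>
      rcases ih with h | ⟨hy, hyb⟩
      · exact Or.inl h
      obtain ⟨f, hf, hfxy⟩ := hxy
      have hcolor : ∀ m, col f = m →
          compTgt src tgt col (x, m) = compTgt src tgt col (y, m) := by
        rintro m rfl
        exact compTgt_eq.mpr ⟨rfl, Relation.ReflTransGen.single ⟨f, by simp, hfxy⟩⟩
      have hlink : ∀ m, col f = m → (x, m) ∉ S → (y, m) ∉ S →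
          reachOn (compSrc src tgt col) (compTgt src tgt col) S (Sum.inl x)
            (compTgt src tgt col (b, ℓ)) := by
        intro m hm h1 h2
        have h3 := reachOn_symm (step y m h2)
        rw [← hcolor m hm] at h3
        exact ((step x m h1).trans h3).trans hyb
      by_cases hm : col f = ℓ
      · have hxyR : R x y := Relation.ReflTransGen.single
          ⟨f, by simpa [hm] using hf, hfxy⟩
        have hx : ¬ R a x := fun h => hy (h.trans hxyR)
        exact Or.inr ⟨hx, hlink ℓ hm (fun h => hx h.2) fun h => hy h.2⟩
      · have hxb := hlink (col f) rfl (fun h => hm h.1) fun h => hm h.1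
        by_cases hx : R a x
        · refine Or.inl ⟨x, hx, not_not.mpr ?_⟩
          have hxl : compTgt src tgt col (x, ℓ) = compTgt src tgt col (b, ℓ) :=
            compTgt_eq.mpr ⟨rfl, (reachOn_symm
              (reachOn_mono (Set.subset_insert _ _) hx)).trans hab⟩
          rw [hxl]
          exact reachOn_mono (Set.singleton_subset_iff.mpr (show (x, ℓ) ∈ S from ⟨rfl, hx⟩)) hxb
        · exact Or.inr ⟨hx, hxb⟩
  rcases main a hbr with h | ⟨h, -⟩
  · exact h
  · exact absurd Relation.ReflTransGen.refl h

variable (src tgt col)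

/-- Sources of the edges of the subgraph of colour `ℓ` attached to a hub. -/
def hubSrc (ℓ : Fin L) : {e : E // col e = ℓ} ⊕ HubEdge src tgt col ℓ → Option W
  | Sum.inl e => some (src e)
  | Sum.inr (Sum.inl w) => some w
  | Sum.inr (Sum.inr C) => some C.1.1.out

/-- Targets of the edges of the subgraph of colour `ℓ` attached to a hub. -/
def hubTgt (ℓ : Fin L) : {e : E // col e = ℓ} ⊕ HubEdge src tgt col ℓ → Option W
  | Sum.inl e => some (tgt e)
  | Sum.inr _ => none

variable {src tgt col}

lemma reachOn_hub_of_reachOn {ℓ : Fin L} {G : Set E}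
    {G' : Set ({e : E // col e = ℓ} ⊕ HubEdge src tgt col ℓ)}
    (hG : ∀ e, e ∉ G → ∃ h : col e = ℓ, Sum.inl ⟨e, h⟩ ∉ G') {a b : W}
    (h : reachOn src tgt G a b) :
    reachOn (hubSrc src tgt col ℓ) (hubTgt src tgt col ℓ) G' (some a) (some b) := by
  refine reachOn_lift some (fun e he => ?_) h
  obtain ⟨he', hG'⟩ := hG e he
  exact reachOn_of_edge (src := hubSrc src tgt col ℓ) hG'

lemma reachOn_hub (ℓ : Fin L) (v : Option W) :
    reachOn (hubSrc src tgt col ℓ) (hubTgt src tgt col ℓ) ∅ none v := by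
  rcases v with _ | v
  · exact .refl
  have hlift : ∀ {a b}, reachOn src tgt {e | col e ≠ ℓ} a b →
      reachOn (hubSrc src tgt col ℓ) (hubTgt src tgt col ℓ) ∅ (some a) (some b) :=
    fun h => reachOn_hub_of_reachOn (fun e he => ⟨not_not.mp he, by simp⟩) h
  by_cases hD : Dead src tgt col ℓ (colorComp src tgt col ℓ v)
  · have h1 := reachOn_of_edge_symm (src := hubSrc src tgt col ℓ) (tgt := hubTgt src tgt col ℓ)
      (F := ∅) (e := Sum.inr (Sum.inr (⟨_, hD⟩, true))) (by simp)
    have h2 : reachOn src tgt {e | col e ≠ ℓ} (colorComp src tgt col ℓ v).out v :=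
      Quotient.mk_out (s := connSetoid src tgt {e | col e ≠ ℓ}) v
    exact h1.trans (hlift h2)
  · simp only [Dead, not_forall, not_not] at hD
    obtain ⟨w, hw, hlive⟩ := hD
    have h1 := reachOn_of_edge_symm (src := hubSrc src tgt col ℓ) (tgt := hubTgt src tgt col ℓ)
      (F := ∅) (e := Sum.inr (Sum.inl ⟨w, hlive⟩)) (by simp)
    exact h1.trans (hlift (colorComp_eq.mp hw))

lemma not_isCutEdge_hub [Finite W] (hbr : ∀ e, ¬ IsCutEdge src tgt e) (ℓ : Fin L)
    (e : {e : E // col e = ℓ} ⊕ HubEdge src tgt col ℓ) :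
    ¬ IsCutEdge (hubSrc src tgt col ℓ) (hubTgt src tgt col ℓ) e := by
  rw [IsCutEdge, not_not]
  rcases e with ⟨e, he⟩ | ⟨w, hw⟩ | ⟨C, b⟩
  · have hlift : ∀ {a b}, reachOn src tgt (insert e {e | col e ≠ ℓ}) a b →
        reachOn (hubSrc src tgt col ℓ) (hubTgt src tgt col ℓ) {Sum.inl ⟨e, he⟩}
          (some a) (some b) := by
      refine fun h => reachOn_hub_of_reachOn (fun f hf => ?_) h
      simp only [Set.mem_insert_iff, Set.mem_ofPred_eq, not_or, not_not] at hf
      exact ⟨hf.2, by simpa using hf.1⟩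
    have hhub : ∀ {a w}, reachOn src tgt (insert e {e | col e ≠ ℓ}) a w → Live src tgt col w ℓ →
        reachOn (hubSrc src tgt col ℓ) (hubTgt src tgt col ℓ) {Sum.inl ⟨e, he⟩}
          (some a) none := fun h hw => (hlift h).trans
      (reachOn_of_edge (src := hubSrc src tgt col ℓ) (tgt := hubTgt src tgt col ℓ)
        (e := Sum.inr (Sum.inl ⟨_, hw⟩)) (by simp))
    by_cases hR : reachOn src tgt (insert e {e | col e ≠ ℓ}) (src e) (tgt e)
    · exact hlift hR
    · have h1 : reachOn src tgt {e | col e ≠ ℓ} (src e) (tgt e) :=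
        reachOn_of_edge (by simpa using he)
      have h2 := not_not.mp (hbr e)
      obtain ⟨w, hw, hwl⟩ := exists_live_of_not_reachOn h1 h2 hR
      obtain ⟨w', hw', hwl'⟩ := exists_live_of_not_reachOn (reachOn_symm h1)
        (reachOn_symm h2) fun h => hR (reachOn_symm h)
      exact (hhub hw hwl).trans (reachOn_symm (hhub hw' hwl'))
  · obtain ⟨w', hne, hr, hw'⟩ := hw.exists_vertex_ne
    have h1 : reachOn (hubSrc src tgt col ℓ) (hubTgt src tgt col ℓ) {Sum.inr (Sum.inl ⟨w, hw⟩)}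
        (some w) (some w') :=
      reachOn_hub_of_reachOn (fun f hf => ⟨not_not.mp hf, by simp⟩) hr
    exact h1.trans (reachOn_of_edge (src := hubSrc src tgt col ℓ) (tgt := hubTgt src tgt col ℓ)
        (e := Sum.inr (Sum.inl ⟨w', hw'⟩)) (by simpa using hne))
  · exact reachOn_of_edge (src := hubSrc src tgt col ℓ) (tgt := hubTgt src tgt col ℓ)
        (e := Sum.inr (Sum.inr (C, !b))) (by simp)

end Hub

section Chain

variable {W E : Type} {L : ℕ} (src tgt : E → W) (col : E → Fin L)

/-- There is a sequence of vertices from `a` to `b`, without stationary step, whose successive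
steps are connections in the prescribed colours. -/
def ColorChain : List (Fin L) → W → W → Prop
  | [], a, b => a = b
  | ℓ :: ls, a, b => ∃ c, a ≠ c ∧ reachOn src tgt {e | col e ≠ ℓ} a c ∧ ColorChain ls c b

variable {src tgt col}

lemma exists_live_of_compReach {z i : W} {ℓ : Fin L} (ls : List (Fin L))
    (hls : (ℓ :: ls).IsChain (· ≠ ·))
    (hz : reachOn (compSrc src tgt col) (compTgt src tgt col) {(z, ℓ)} (Sum.inl i)
      (compTgt src tgt col (z, ℓ)))
    (hc : ColorChain src tgt col ls z i) : ∃ w m, Live src tgt col w m := by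
  induction ls generalizing z ℓ with
  | nil =>
    subst hc
    exact ⟨z, ℓ, not_not.mpr hz⟩
  | cons m ls ih =>
    obtain ⟨c, hne, hr, hc⟩ := hc
    rw [List.isChain_cons_cons] at hls
    have hedge : reachOn (compSrc src tgt col) (compTgt src tgt col) {(z, ℓ)} (Sum.inl z)
        (compTgt src tgt col (z, m)) :=
      reachOn_of_edge (e := (z, m)) (by simpa using hls.1.symm)
    have hstep : reachOn (compSrc src tgt col) (compTgt src tgt col) {(c, m)}
        (Sum.inl z) (compTgt src tgt col (c, m)) := by
      rw [← compTgt_eq.mpr ⟨rfl, hr⟩]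
      exact reachOn_of_edge (e := (z, m)) (by simpa using hne)
    by_cases hl : Live src tgt col z ℓ
    · exact ⟨z, ℓ, hl⟩
    have hl' : IsCutEdge (compSrc src tgt col) (compTgt src tgt col) (z, ℓ) := not_not.mp hl
    have hback : reachOn (compSrc src tgt col) (compTgt src tgt col) {(c, m)}
        (compTgt src tgt col (z, ℓ)) (Sum.inl z) :=
      reachOn_of_edge_symm (e := (z, ℓ)) (by simp [hne])
    refine ih hls.2 ?_ hc
    have hsub : ({(c, m)} : Set (W × Fin L)) ⊆ insert (c, m) {(z, ℓ)} := by simp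
    have hsub' : ({(z, ℓ)} : Set (W × Fin L)) ⊆ insert (c, m) {(z, ℓ)} := by simp
    have hcz : compTgt src tgt col (c, m) = compTgt src tgt col (z, m) :=
      (compTgt_eq.mpr ⟨rfl, hr⟩).symm
    rcases reachOn_insert_or (c, m) hz with h | ⟨-, h⟩ | ⟨h, -⟩
    · exact ((reachOn_mono hsub h).trans hback).trans hstep
    · rw [hcz] at h
      exact absurd (hedge.trans (reachOn_mono hsub' h)) hl'
    · exact reachOn_mono hsub h

/-- A nonempty closed chain with alternating colours produces a live vertex. -/
lemma ColorChain.exists_live {ls : List (Fin L)} {a : W} (h : ColorChain src tgt col ls a a)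
    (hne : ls ≠ []) (hls : ls.IsChain (· ≠ ·)) : ∃ w m, Live src tgt col w m := by
  obtain _ | ⟨ℓ, ls⟩ := ls
  · exact absurd rfl hne
  obtain ⟨c, hac, hr, hc⟩ := h
  refine exists_live_of_compReach ls hls ?_ hc
  rw [← compTgt_eq.mpr ⟨rfl, hr⟩]
  exact reachOn_of_edge (e := (a, ℓ)) (by simpa using hac)

end Chain

section ColorBound

variable {W E : Type} {L N : ℕ} {src tgt : E → W} {col : E → Fin L} [Fintype W] [Fintype E]

/-- The sum over injective labellings of the weight of the edges of colour `ℓ` is bounded in terms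
of the number of attachments of this colour. -/
lemma norm_sum_injective_le (hbr : ∀ e, ¬ IsCutEdge src tgt e) (ℓ : Fin L)
    {B : E → Matrix (Fin N) (Fin N) ℂ} (hB : ∀ e, matOpNorm (B e) ≤ 1) (hN : 0 < N) :
    ‖∑ ψ : W → Fin N, if Function.Injective ψ then
        ∏ e : {e // col e = ℓ}, B e (ψ (tgt e)) (ψ (src e)) else 0‖ ≤
      5 ^ (Fintype.card W * Fintype.card W) *
        4 ^ (Fintype.card E + Fintype.card (HubEdge src tgt col ℓ)) *
        √N ^ Fintype.card (HubEdge src tgt col ℓ) := by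
  set s := Fintype.card (HubEdge src tgt col ℓ) with hs
  have hN' : (0 : ℝ) < √N := Real.sqrt_pos.mpr (by exact_mod_cast hN)
  let i₀ : Fin N := ⟨0, hN⟩
  let B' : {e : E // col e = ℓ} ⊕ HubEdge src tgt col ℓ → Matrix (Fin N) (Fin N) ℂ :=
    Sum.elim (fun e => B e) fun _ => hubMatrix i₀
  have hB' : ∀ e, matOpNorm (B' e) ≤ 1 := by
    rintro (e | e)
    · exact hB e
    · exact matOpNorm_hubMatrix_le i₀
  have hwb := weightBound_of_bridgeless hB' i₀ none (reachOn_hub (src := src) (tgt := tgt)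
    (col := col) ℓ) (not_isCutEdge_hub hbr ℓ)
  let P : Finset (Option W × Option W) :=
    (Finset.univ : Finset W).offDiag.map
      ⟨fun p => (some p.1, some p.2), fun p q h => by
        simp only [Prod.mk.injEq, Option.some.injEq] at h
        exact Prod.ext h.1 h.2⟩
  have hPc : P.card ≤ Fintype.card W * Fintype.card W := by
    rw [Finset.card_map, Finset.offDiag_card, Finset.card_univ]
    exact Nat.sub_le _ _
  have hsum := (hwb.mul_ne P).sum_le
  have hEc : Fintype.card ({e : E // col e = ℓ} ⊕ HubEdge src tgt col ℓ) ≤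
      Fintype.card E + s := by
    rw [Fintype.card_sum]
    exact Nat.add_le_add_right (Fintype.card_subtype_le _) _
  have hev : ∀ T : Finset (Option W), (∀ v, v ∉ T ↔ v = none) → ∑ φ ∈ pinned T i₀,
      edgeWeight (hubSrc src tgt col ℓ) (hubTgt src tgt col ℓ) B' Finset.univ φ *
        ∏ p ∈ P, (1 - (1 : Matrix (Fin N) (Fin N) ℂ) (φ p.1) (φ p.2)) =
      ((√N : ℝ) : ℂ)⁻¹ ^ s * ∑ ψ : W → Fin N, if Function.Injective ψ then
        ∏ e : {e // col e = ℓ}, B e (ψ (tgt e)) (ψ (src e)) else 0 := by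
    intro T hT
    rw [Finset.mul_sum]
    refine Finset.sum_nbij' (fun φ w => φ (some w)) (fun ψ o => o.elim i₀ ψ) (by simp) ?_ ?_ ?_ ?_
    · intro ψ _
      simp [mem_pinned, hT]
    · intro φ hφ
      rw [mem_pinned] at hφ
      funext o
      rcases o with _ | w
      · exact (hφ none ((hT none).mpr rfl)).symm
      · rfl
    · intro ψ _
      rfl
    · intro φ hφ
      rw [mem_pinned] at hφ
      have h0 : φ none = i₀ := hφ none ((hT none).mpr rfl)
      have h1 : edgeWeight (hubSrc src tgt col ℓ) (hubTgt src tgt col ℓ) B' Finset.univ φ =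
          (∏ e : {e // col e = ℓ}, B e (φ (some (tgt e))) (φ (some (src e)))) *
            ((√N : ℝ) : ℂ)⁻¹ ^ s := by
        rw [edgeWeight, Fintype.prod_sum_type]
        congr 1
        rw [hs, ← Finset.card_univ, ← Finset.prod_const]
        refine Finset.prod_congr rfl fun e _ => ?_
        simp [B', hubTgt, h0, hubMatrix]
      have h2 : ∏ p ∈ P, (1 - (1 : Matrix (Fin N) (Fin N) ℂ) (φ p.1) (φ p.2)) =
          if Function.Injective fun w => φ (some w) then 1 else 0 := by
        rw [Finset.prod_map]
        split_ifs with hinj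
        · refine Finset.prod_eq_one fun p hp => ?_
          rw [Finset.mem_offDiag] at hp
          have : φ (some p.1) ≠ φ (some p.2) := fun h => hp.2.2 (hinj h)
          exact (congrArg (1 - ·) (Matrix.one_apply_ne this)).trans (sub_zero 1)
        · simp only [Function.Injective, not_forall] at hinj
          obtain ⟨a, b, hab, hne⟩ := hinj
          refine Finset.prod_eq_zero (i := (a, b)) (by simpa using hne) ?_
          have h_one : (1 : Matrix (Fin N) (Fin N) ℂ) (φ (some a)) (φ (some b)) = 1 := by
            rw [Matrix.one_apply, if_pos hab]
          exact (congrArg (1 - ·) h_one).trans (sub_self 1)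
      rw [h1, h2]
      split_ifs <;> ring
  rw [hev _ (by simp), norm_mul, norm_pow, norm_inv, Complex.norm_real, Real.norm_eq_abs,
    abs_of_pos hN', inv_pow, inv_mul_le_iff₀ (pow_pos hN' s)] at hsum
  refine hsum.trans ?_
  rw [mul_comm]
  gcongr <;> norm_num

end ColorBound

/-! ### Averaging over independent permutations -/

section Average

/-- Averages over permutations are averages over injections. -/
lemma descFactorial_mul_sum_perm {W : Type} [Fintype W] {N : ℕ} {ι : W → Fin N}
    (hι : Function.Injective ι) (h : (W → Fin N) → ℂ) :
    (N.descFactorial (Fintype.card W) : ℂ) * ∑ σ : Equiv.Perm (Fin N), h (σ ∘ ι) =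
      N.factorial * ∑ ψ : W → Fin N, if Function.Injective ψ then h ψ else 0 := by
  have h1 : ∀ ψ : W → Fin N, Function.Injective ψ →
      ∑ σ : Equiv.Perm (Fin N), h (σ ∘ ψ) = ∑ σ : Equiv.Perm (Fin N), h (σ ∘ ι) := by
    intro ψ hψ
    let τ : Equiv.Perm (Fin N) :=
      ((Equiv.ofInjective ι hι).symm.trans (Equiv.ofInjective ψ hψ)).extendSubtype
    have hτ : ⇑τ ∘ ι = ψ := by
      funext w
      have hw := Equiv.extendSubtype_apply_of_mem
        ((Equiv.ofInjective ι hι).symm.trans (Equiv.ofInjective ψ hψ)) (ι w) ⟨w, rfl⟩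
      refine hw.trans ?_
      rw [Equiv.trans_apply, Equiv.ofInjective_symm_apply hι w]
      rfl
    rw [← Equiv.sum_comp (Equiv.mulRight τ) fun σ => h (σ ∘ ι)]
    refine Finset.sum_congr rfl fun σ _ => ?_
    rw [← hτ]
    rfl
  have h2 : ∀ σ : Equiv.Perm (Fin N),
      (∑ ψ : W → Fin N, if Function.Injective ψ then h (σ ∘ ψ) else 0) =
        ∑ ψ : W → Fin N, if Function.Injective ψ then h ψ else 0 := by
    intro σ
    rw [← Equiv.sum_comp (Equiv.arrowCongr (Equiv.refl W) σ)
      fun ψ => if Function.Injective ψ then h ψ else 0]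
    refine Finset.sum_congr rfl fun ψ _ => ?_
    have hψ : Equiv.arrowCongr (Equiv.refl W) σ ψ = σ ∘ ψ := rfl
    simp only [hψ, σ.injective.of_comp_iff]
  have hcard : ((Finset.univ.filter fun ψ : W → Fin N => Function.Injective ψ).card : ℂ) =
      N.descFactorial (Fintype.card W) := by
    rw [← Fintype.card_subtype, Fintype.card_congr (Equiv.subtypeInjectiveEquivEmbedding W (Fin N)),
      Fintype.card_embedding_eq, Fintype.card_fin]
  have h3 := Finset.sum_comm (s := (Finset.univ : Finset (Equiv.Perm (Fin N))))
    (t := (Finset.univ : Finset (W → Fin N)))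
    (f := fun σ ψ => if Function.Injective ψ then h (σ ∘ ψ) else 0)
  rw [Finset.sum_congr rfl fun σ _ => h2 σ, Finset.sum_const, Finset.card_univ,
    Fintype.card_perm, Fintype.card_fin, nsmul_eq_mul] at h3
  rw [h3, ← hcard, ← nsmul_eq_mul, ← Finset.sum_const, Finset.sum_filter]
  refine Finset.sum_congr rfl fun ψ _ => ?_
  split_ifs with hψ
  · exact (h1 ψ hψ).symm
  · simp

lemma norm_sum_perm_le {W : Type} [Fintype W] {N : ℕ} {ι : W → Fin N}
    (hι : Function.Injective ι) (h : (W → Fin N) → ℂ) (hN : 2 * Fintype.card W ≤ N) :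
    ‖∑ σ : Equiv.Perm (Fin N), h (σ ∘ ι)‖ * (N : ℝ) ^ Fintype.card W ≤
      N.factorial * 2 ^ Fintype.card W *
        ‖∑ ψ : W → Fin N, if Function.Injective ψ then h ψ else 0‖ := by
  have h1 := congrArg norm (descFactorial_mul_sum_perm hι h)
  rw [norm_mul, norm_mul, Complex.norm_natCast, Complex.norm_natCast] at h1
  have h2 : (N : ℝ) ^ Fintype.card W ≤
      2 ^ Fintype.card W * N.descFactorial (Fintype.card W) := by
    have h3 : N ^ Fintype.card W ≤ 2 ^ Fintype.card W * N.descFactorial (Fintype.card W) := by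
      calc N ^ Fintype.card W ≤ (2 * (N + 1 - Fintype.card W)) ^ Fintype.card W :=
            Nat.pow_le_pow_left (by omega) _
        _ = 2 ^ Fintype.card W * (N + 1 - Fintype.card W) ^ Fintype.card W := mul_pow _ _ _
        _ ≤ _ := Nat.mul_le_mul_left _ (Nat.pow_sub_le_descFactorial _ _)
    exact_mod_cast h3
  calc _ ≤ ‖∑ σ : Equiv.Perm (Fin N), h (σ ∘ ι)‖ *
        (2 ^ Fintype.card W * N.descFactorial (Fintype.card W)) := by gcongr
    _ = 2 ^ Fintype.card W * (N.descFactorial (Fintype.card W) *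
        ‖∑ σ : Equiv.Perm (Fin N), h (σ ∘ ι)‖) := by ring
    _ = _ := by rw [h1]; ring

/-- Labellings are rare with respect to the size of their range. -/
lemma sum_inv_pow_card_range_le {V : Type} [Fintype V] {N : ℕ} :
    ∑ φ : V → Fin N, ((N : ℝ) ^ Fintype.card (Set.range φ))⁻¹ ≤
      (Fintype.card V : ℝ) ^ Fintype.card V := by
  let r : (V → Fin N) → V → V := fun φ v => Set.rangeSplitting φ (Set.rangeFactorization φ v)
  have hr : ∀ (φ : V → Fin N) v, φ (r φ v) = φ v := fun φ v =>
    Set.apply_rangeSplitting φ (Set.rangeFactorization φ v)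
  have hr' : ∀ (φ : V → Fin N) v u, φ v = φ u → r φ v = r φ u := by
    intro φ v u h
    have : Set.rangeFactorization φ v = Set.rangeFactorization φ u := Subtype.ext h
    simp only [r, this]
  have hfib : ∀ ρ : V → V, ∑ φ ∈ Finset.univ.filter (fun φ : V → Fin N => r φ = ρ),
      ((N : ℝ) ^ Fintype.card (Set.range φ))⁻¹ ≤ 1 := by
    intro ρ
    rcases Nat.eq_zero_or_pos N with rfl | hN
    · rcases isEmpty_or_nonempty V with hV | hV
      · refine (Finset.sum_le_sum (g := fun _ => (1 : ℝ)) fun φ _ => ?_).trans ?_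
        · simp
        · simp only [Finset.sum_const, nsmul_eq_mul, mul_one]
          exact_mod_cast (Finset.card_le_univ _).trans (by simp)
      · have : IsEmpty (V → Fin 0) := ⟨fun φ => (φ hV.some).elim0⟩
        simp
    have hN' : (1 : ℝ) ≤ N := by exact_mod_cast hN
    have hle : ∀ φ ∈ Finset.univ.filter (fun φ : V → Fin N => r φ = ρ),
        ((N : ℝ) ^ Fintype.card (Set.range φ))⁻¹ ≤ ((N : ℝ) ^ Fintype.card (Set.range ρ))⁻¹ := by
      intro φ hφ
      obtain rfl : r φ = ρ := (Finset.mem_filter.mp hφ).2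
      gcongr ?_⁻¹
      refine pow_le_pow_right₀ hN' (Fintype.card_le_of_injective
        (fun x : Set.range (r φ) => (⟨φ x, x, rfl⟩ : Set.range φ)) ?_)
      rintro ⟨_, v, rfl⟩ ⟨_, u, rfl⟩ h
      have h' : φ (r φ v) = φ (r φ u) := congrArg Subtype.val h
      exact Subtype.ext (hr' φ v u (((hr φ v).symm.trans h').trans (hr φ u)))
    refine (Finset.sum_le_sum hle).trans ?_
    rw [Finset.sum_const, nsmul_eq_mul, mul_inv_le_iff₀ (by positivity), one_mul]
    have hc : (Finset.univ.filter fun φ : V → Fin N => r φ = ρ).card ≤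
        N ^ Fintype.card (Set.range ρ) := by
      rw [← Fintype.card_subtype]
      refine (Fintype.card_le_of_injective
        (fun φ : {φ : V → Fin N // r φ = ρ} => fun x : Set.range ρ => φ.1 x) ?_).trans_eq
        (by rw [Fintype.card_fun, Fintype.card_fin])
      rintro ⟨φ, hφ⟩ ⟨φ', hφ'⟩ h
      refine Subtype.ext (funext fun v => ?_)
      have h' : φ (ρ v) = φ' (ρ v) := congrFun h ⟨ρ v, v, rfl⟩
      have e1 := hr φ v
      have e2 := hr φ' v
      rw [hφ] at e1
      rw [hφ'] at e2
      exact (e1.symm.trans h').trans e2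
    exact_mod_cast hc
  rw [← Finset.sum_fiberwise (s := Finset.univ) (g := r)]
  refine (Finset.sum_le_sum fun ρ _ => hfib ρ).trans ?_
  simp

variable {V E : Type} {L N : ℕ} [Fintype V] [Fintype E]

/-- The labelling `φ` identifies vertices in such a way that the resulting graph is connected,
bridgeless, and its graph of coloured components contains a cycle. -/
def IsTightLabel (src tgt : E → V) (col : E → Fin L) {W : Type} (q : V → W) : Prop :=
  IsConnectedGraph (q ∘ src) (q ∘ tgt) ∧ (∀ e, ¬ IsCutEdge (q ∘ src) (q ∘ tgt) e) ∧
    ∃ w ℓ, Live (q ∘ src) (q ∘ tgt) col w ℓ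

lemma norm_sum_perms_prod_le {src tgt : E → V} {col : E → Fin L} {φ : V → Fin N}
    (hφ : IsTightLabel src tgt col (Set.rangeFactorization φ))
    {B : E → Matrix (Fin N) (Fin N) ℂ} (hB : ∀ e, matOpNorm (B e) ≤ 1)
    (hN : 2 * Fintype.card V ≤ N) (hN0 : 0 < N) :
    ‖∑ σ : Fin L → Equiv.Perm (Fin N),
        ∏ e, B e (σ (col e) (φ (tgt e))) (σ (col e) (φ (src e)))‖ ≤
      (N.factorial : ℝ) ^ L *
        (2 ^ Fintype.card V * 5 ^ (Fintype.card V * Fintype.card V) * 4 ^ Fintype.card E) ^ L *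
        4 ^ (2 * (L * Fintype.card V)) * ((N : ℝ) ^ Fintype.card (Set.range φ))⁻¹ := by
  obtain ⟨hconn, hbr, w₀, ℓ₀, hlive⟩ := hφ
  set q := Set.rangeFactorization φ with hq
  set w := Fintype.card (Set.range φ) with hw
  have hNr : (1 : ℝ) ≤ N := by exact_mod_cast hN0
  have hwV : w ≤ Fintype.card V := Fintype.card_range_le φ
  have hcount := sum_card_hubEdge_le hconn hlive
  rw [← hw] at hcount
  let s : Fin L → ℕ := fun ℓ => Fintype.card (HubEdge (q ∘ src) (q ∘ tgt) col ℓ)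
  have hcount' : ∑ ℓ, s ℓ + 2 * w ≤ 2 * (L * w) := hcount
  have hprod : ∑ σ : Fin L → Equiv.Perm (Fin N),
        ∏ e, B e (σ (col e) (φ (tgt e))) (σ (col e) (φ (src e))) =
      ∏ ℓ, ∑ σ : Equiv.Perm (Fin N), ∏ e : {e // col e = ℓ},
        B e (σ (φ (tgt e))) (σ (φ (src e))) := by
    rw [Finset.prod_univ_sum, Fintype.piFinset_univ]
    refine Finset.sum_congr rfl fun σ _ => ?_
    rw [← Fintype.prod_fiberwise col]
    refine Finset.prod_congr rfl fun ℓ _ => Finset.prod_congr rfl fun e _ => ?_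
    rw [e.2]
  have hcol : ∀ ℓ, ‖∑ σ : Equiv.Perm (Fin N), ∏ e : {e // col e = ℓ},
        B e (σ (φ (tgt e))) (σ (φ (src e)))‖ ≤
      N.factorial * (2 ^ Fintype.card V * 5 ^ (Fintype.card V * Fintype.card V) *
        4 ^ Fintype.card E) * (4 ^ s ℓ * √N ^ s ℓ) * ((N : ℝ) ^ w)⁻¹ := by
    intro ℓ
    have h1 := norm_sum_perm_le (ι := fun x : Set.range φ => (x : Fin N)) Subtype.val_injective
      (fun ψ => ∏ e : {e // col e = ℓ}, B e (ψ (q (tgt e))) (ψ (q (src e))))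
      (by omega)
    have h2 := norm_sum_injective_le (col := col) hbr ℓ hB hN0
    rw [← hw] at h1 h2
    rw [le_mul_inv_iff₀ (by positivity)]
    refine h1.trans ?_
    calc (N.factorial : ℝ) * 2 ^ w * _ ≤ N.factorial * 2 ^ w * (5 ^ (w * w) *
          4 ^ (Fintype.card E + s ℓ) * √N ^ s ℓ) := by gcongr; exact h2
      _ ≤ N.factorial * 2 ^ Fintype.card V * (5 ^ (Fintype.card V * Fintype.card V) *
          4 ^ (Fintype.card E + s ℓ) * √N ^ s ℓ) := by gcongr <;> norm_num
      _ = _ := by rw [pow_add]; ring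
  rw [hprod, norm_prod]
  refine (Finset.prod_le_prod (fun _ _ => norm_nonneg _) fun ℓ _ => hcol ℓ).trans ?_
  simp only [Finset.prod_mul_distrib, Finset.prod_const, Finset.card_univ, Fintype.card_fin,
    Finset.prod_pow_eq_pow_sum]
  have h4 : (4 : ℝ) ^ (∑ ℓ, s ℓ) ≤ 4 ^ (2 * (L * Fintype.card V)) := by
    refine pow_le_pow_right₀ (by norm_num) ?_
    have : L * w ≤ L * Fintype.card V := Nat.mul_le_mul_left _ hwV
    omega
  have h5 : √N ^ (∑ ℓ, s ℓ) * (((N : ℝ) ^ w)⁻¹) ^ L ≤ ((N : ℝ) ^ w)⁻¹ := by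
    rw [inv_pow, ← pow_mul, mul_inv_le_iff₀ (by positivity), ← div_eq_inv_mul,
      le_div_iff₀ (by positivity)]
    calc √N ^ (∑ ℓ, s ℓ) * (N : ℝ) ^ w = √N ^ (∑ ℓ, s ℓ + 2 * w) := by
          rw [pow_add, pow_mul √(N : ℝ) 2, Real.sq_sqrt (by positivity)]
      _ ≤ √N ^ (2 * (L * w)) := pow_le_pow_right₀ (Real.one_le_sqrt.mpr hNr) hcount'
      _ = (N : ℝ) ^ (w * L) := by
          rw [pow_mul √(N : ℝ) 2, Real.sq_sqrt (by positivity), mul_comm L]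
  calc _ = (N.factorial : ℝ) ^ L *
        (2 ^ Fintype.card V * 5 ^ (Fintype.card V * Fintype.card V) * 4 ^ Fintype.card E) ^ L *
        4 ^ (∑ ℓ, s ℓ) * (√N ^ (∑ ℓ, s ℓ) * (((N : ℝ) ^ w)⁻¹) ^ L) := by
        simp only [mul_pow]
        ring
    _ ≤ _ := by gcongr

/-- The sum over tight labellings of the weights of randomly permuted contractions is bounded
uniformly in the dimension. -/
theorem norm_sum_perms_sum_le (src tgt : E → V) (col : E → Fin L) (Φ : Finset (V → Fin N))
    (hΦ : ∀ φ ∈ Φ, IsTightLabel src tgt col (Set.rangeFactorization φ))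
    {B : E → Matrix (Fin N) (Fin N) ℂ} (hB : ∀ e, matOpNorm (B e) ≤ 1)
    (hN : 2 * Fintype.card V ≤ N) (hN0 : 0 < N) :
    ‖∑ σ : Fin L → Equiv.Perm (Fin N), ∑ φ ∈ Φ,
        ∏ e, B e (σ (col e) (φ (tgt e))) (σ (col e) (φ (src e)))‖ ≤
      (N.factorial : ℝ) ^ L *
        ((2 ^ Fintype.card V * 5 ^ (Fintype.card V * Fintype.card V) * 4 ^ Fintype.card E) ^ L *
        4 ^ (2 * (L * Fintype.card V)) * (Fintype.card V : ℝ) ^ Fintype.card V) := by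
  rw [Finset.sum_comm]
  refine (norm_sum_le _ _).trans ((Finset.sum_le_sum fun φ hφ =>
    norm_sum_perms_prod_le (hΦ φ hφ) hB hN hN0).trans ?_)
  rw [← Finset.mul_sum, mul_assoc _ _ (4 ^ _ : ℝ), mul_assoc, ← mul_assoc (_ ^ L : ℝ) (_ * _ : ℝ)]
  have h := (Finset.sum_le_sum_of_subset_of_nonneg (Finset.subset_univ Φ)
    fun φ _ _ => by positivity).trans (sum_inv_pow_card_range_le (V := V) (N := N))
  rw [mul_assoc]
  exact mul_le_mul_of_nonneg_left (mul_le_mul_of_nonneg_left h (by positivity)) (by positivity)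

end Average

/-! ### Diagrams -/

section ReachLift

variable {V V' E E' W : Type} {L : ℕ}

lemma reachOn_swap {src tgt : E → V} {F : Set E} {a b : V} (h : reachOn src tgt F a b) :
    reachOn tgt src F a b :=
  reachOn_lift (src' := tgt) (tgt' := src) id (fun _ he => reachOn_of_edge_symm (src := tgt) he) h

lemma reachOn_map_edges {src tgt : E → V} {src' tgt' : E' → V} {F : Set E} {G : Set E'}
    (f : E → E') (hs : ∀ e, src' (f e) = src e) (ht : ∀ e, tgt' (f e) = tgt e)
    (hf : ∀ e, e ∉ F → f e ∉ G) {a b : V} (h : reachOn src tgt F a b) :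
    reachOn src' tgt' G a b := by
  refine reachOn_lift (src' := src') (tgt' := tgt') id (fun e he => ?_) h
  have := reachOn_of_edge (src := src') (tgt := tgt') (hf e he)
  rwa [hs, ht] at this

lemma reachOn_comp {src tgt : E → V} {F : Set E} (q : V → W) {a b : V}
    (h : reachOn src tgt F a b) : reachOn (q ∘ src) (q ∘ tgt) F (q a) (q b) :=
  reachOn_lift q (fun _ he => reachOn_of_edge (src := q ∘ src) (tgt := q ∘ tgt) he) h

lemma ColorChain.map_edges {src tgt : E → V} {src' tgt' : E' → V} {col : E → Fin L}
    {col' : E' → Fin L} (f : E → E') (hs : ∀ e, src' (f e) = src e)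
    (ht : ∀ e, tgt' (f e) = tgt e) (hc : ∀ e, col' (f e) = col e) {ls : List (Fin L)} {a b : V}
    (h : ColorChain src tgt col ls a b) : ColorChain src' tgt' col' ls a b := by
  induction ls generalizing a with
  | nil => exact h
  | cons ℓ ls ih =>
    obtain ⟨c, hac, hr, hch⟩ := h
    exact ⟨c, hac, reachOn_map_edges f hs ht (fun e he => by simpa [hc] using he) hr, ih hch⟩

end ReachLift

/-- An edge of an oriented cactus is not a cut edge. -/
lemma GraphMonomial.IsOrientedCactus.not_isCutEdge {L : ℕ} {K : Type} {g : GraphMonomial L K}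
    (hg : g.IsOrientedCactus) (e : g.E) : ¬ IsCutEdge g.src g.tgt e := by
  obtain ⟨S, ⟨⟨c, ⟨hne, hcyc, hnd, -⟩, rfl⟩, heS⟩, -⟩ := hg.2.2 e
  have hpos : 0 < c.length := List.length_pos_iff.mpr hne
  let c' : ℕ → g.E × Bool := fun k => c.get ⟨k % c.length, Nat.mod_lt _ hpos⟩
  have hstep : ∀ k, g.stepTgt (c' k) = g.stepSrc (c' (k + 1)) := by
    intro k
    have h := hcyc ⟨k % c.length, Nat.mod_lt _ hpos⟩
    simpa only [c', Nat.mod_add_mod] using h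
  have hreach : ∀ (F : Set g.E) (s : g.E × Bool), s.1 ∉ F →
      reachOn g.src g.tgt F (g.stepSrc s) (g.stepTgt s) := by
    rintro F ⟨f, _ | _⟩ hs
    · exact reachOn_of_edge_symm hs
    · exact reachOn_of_edge hs
  rw [List.mem_toFinset, List.mem_map] at heS
  obtain ⟨s, hs, rfl⟩ := heS
  obtain ⟨⟨i, hi⟩, rfl⟩ := List.mem_iff_get.mp hs
  have hci : c' i = c.get ⟨i, hi⟩ := by simp [c', Nat.mod_eq_of_lt hi]
  have hwalk : ∀ m, m < c.length → reachOn g.src g.tgt {(c.get ⟨i, hi⟩).1} (g.stepTgt (c' i))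
      (g.stepSrc (c' (i + 1 + m))) := by
    intro m
    induction m with
    | zero => intro _; rw [hstep i]; exact .refl
    | succ m ih =>
      intro hm
      refine (ih (by omega)).trans ?_
      rw [← add_assoc, ← hstep]
      refine hreach _ _ ?_
      intro hmem
      have h1 : (c.map Prod.fst)[(i + 1 + m) % c.length]'(by
          rw [List.length_map]; exact Nat.mod_lt _ hpos) =
          (c.map Prod.fst)[i]'(by rwa [List.length_map]) := by
        simpa [c'] using hmem
      have h2 := (List.Nodup.getElem_inj_iff hnd).mp h1
      rcases lt_or_ge (i + 1 + m) c.length with hlt | hge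
      · rw [Nat.mod_eq_of_lt hlt] at h2
        omega
      · rw [Nat.mod_eq_sub_mod hge, Nat.mod_eq_of_lt (by omega)] at h2
        omega
  have hfull := hwalk (c.length - 1) (by omega)
  have hlast : c' (i + 1 + (c.length - 1)) = c' i := by
    have : i + 1 + (c.length - 1) = i + c.length := by omega
    simp [c', this]
  rw [hlast, hci] at hfull
  rw [IsCutEdge, not_not]
  generalize c.get ⟨i, hi⟩ = s at hfull
  obtain ⟨f, _ | _⟩ := s
  · exact hfull
  · exact reachOn_symm hfull

/-- A graph whose edges carry a colour and a label in `K`, the Boolean telling whether the label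
stands for a matrix or its adjoint, with two roots and a condition on the labellings of the
vertices, depending only on the partition of the vertices they induce. -/
structure Diagram (L : ℕ) (K : Type) where
  V : Type
  E : Type
  fintV : Fintype V
  fintE : Fintype E
  src : E → V
  tgt : E → V
  col : E → Fin L
  lab : E → K × Bool
  vin : V
  vout : V
  ok : ∀ {W : Type}, (V → W) → Prop
  ok_of_comp : ∀ {W W' : Type} (ι : W → W'), Function.Injective ι → ∀ q : V → W, ok (ι ∘ q) → ok q

attribute [instance] Diagram.fintV Diagram.fintE

/-- The matrices indexed by labels and adjoint labels. -/
def signed {L N : ℕ} {K : Type} (A : Fin L → K → Matrix (Fin N) (Fin N) ℂ) (ℓ : Fin L)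
    (x : K × Bool) : Matrix (Fin N) (Fin N) ℂ :=
  if x.2 then A ℓ x.1 else (A ℓ x.1)ᴴ

namespace Diagram

variable {L N : ℕ} {K : Type}

/-- The weight of a labelling. -/
def weight (D : Diagram L K) (A : Fin L → K → Matrix (Fin N) (Fin N) ℂ) (φ : D.V → Fin N) : ℂ :=
  ∏ e, signed A (D.col e) (D.lab e) (φ (D.tgt e)) (φ (D.src e))

/-- The matrix associated with a diagram. -/
def eval (D : Diagram L K) (A : Fin L → K → Matrix (Fin N) (Fin N) ℂ) :
    Matrix (Fin N) (Fin N) ℂ :=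
  Matrix.of fun i j => ∑ φ : D.V → Fin N,
    if D.ok φ ∧ φ D.vin = j ∧ φ D.vout = i then D.weight A φ else 0

lemma trace_eval (D : Diagram L K) (A : Fin L → K → Matrix (Fin N) (Fin N) ℂ) :
    (D.eval A).trace =
      ∑ φ ∈ Finset.univ.filter (fun φ : D.V → Fin N => D.ok φ ∧ φ D.vout = φ D.vin),
        D.weight A φ := by
  simp only [Matrix.trace, Matrix.diag, eval, Matrix.of_apply]
  rw [Finset.sum_comm, Finset.sum_filter]
  refine Finset.sum_congr rfl fun φ _ => ?_
  by_cases h : D.ok φ ∧ φ D.vout = φ D.vin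
  · rw [if_pos h, Finset.sum_eq_single (φ D.vin), if_pos ⟨h.1, rfl, h.2⟩]
    · intro i _ hi
      exact if_neg fun h' => hi h'.2.1.symm
    · simp
  · rw [if_neg h]
    exact Finset.sum_eq_zero fun i _ => if_neg fun h' => h ⟨h'.1, h'.2.2.trans h'.2.1.symm⟩

/-- The diagram of a graph monomial. -/
def ofMonomial (g : GraphMonomial L K) : Diagram L K where
  V := g.V
  E := g.E
  fintV := g.fintV
  fintE := g.fintE
  src := g.src
  tgt := g.tgt
  col := g.labL
  lab e := (g.labK e, true)
  vin := g.vin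
  vout := g.vout
  ok _ := True
  ok_of_comp _ _ _ _ := trivial

lemma eval_ofMonomial (g : GraphMonomial L K) (A : Fin L → K → Matrix (Fin N) (Fin N) ℂ) :
    (ofMonomial g).eval A = g.eval A := by
  ext i j
  simp only [eval, GraphMonomial.eval, Matrix.of_apply]
  refine Finset.sum_congr rfl fun φ _ => if_congr (by simp [ofMonomial]) ?_ rfl
  exact Finset.prod_congr rfl fun e _ => congrFun (congrFun (if_pos rfl) _) _

/-- The diagram of a single matrix. -/
def edge (ℓ : Fin L) (k : K) : Diagram L K where
  V := Bool
  E := Unit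
  fintV := inferInstance
  fintE := inferInstance
  src _ := false
  tgt _ := true
  col _ := ℓ
  lab _ := (k, true)
  vin := false
  vout := true
  ok _ := True
  ok_of_comp _ _ _ _ := trivial

lemma eval_edge (ℓ : Fin L) (k : K) (A : Fin L → K → Matrix (Fin N) (Fin N) ℂ) :
    (edge ℓ k).eval A = A ℓ k := by
  ext i j
  have hw : ∀ φ, (edge ℓ k).weight A φ = A ℓ k (φ (edge ℓ k).vout) (φ (edge ℓ k).vin) := by
    intro φ
    change ∏ _e : Unit, signed A ℓ (k, true) (φ (edge ℓ k).vout) (φ (edge ℓ k).vin) = _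
    simp [signed]
  simp only [eval, hw, Matrix.of_apply]
  rw [Finset.sum_eq_single (show (edge ℓ k).V → Fin N from fun b : Bool => if b then i else j)]
  · exact if_pos ⟨trivial, rfl, rfl⟩
  · intro φ _ hφ
    refine if_neg fun h => hφ (funext fun b => ?_)
    cases b
    · exact h.2.1
    · exact h.2.2
  · exact fun h => absurd (Finset.mem_univ _) h

/-- The diagram of the identity matrix. -/
def one : Diagram L K where
  V := Unit
  E := Empty
  fintV := inferInstance
  fintE := inferInstance
  src := Empty.elim
  tgt := Empty.elim
  col := Empty.elim
  lab := Empty.elim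
  vin := ()
  vout := ()
  ok _ := True
  ok_of_comp _ _ _ _ := trivial

lemma eval_one (A : Fin L → K → Matrix (Fin N) (Fin N) ℂ) :
    (one : Diagram L K).eval A = 1 := by
  ext i j
  have hw : ∀ φ, (one : Diagram L K).weight A φ = 1 := fun φ =>
    Finset.prod_eq_one fun e _ => Empty.elim e
  simp only [eval, hw, Matrix.of_apply, Matrix.one_apply]
  split_ifs with h
  · subst h
    rw [Finset.sum_eq_single fun _ => i]
    · exact if_pos ⟨trivial, rfl, rfl⟩
    · intro φ _ hφ
      exact if_neg fun h => hφ (funext fun _ => h.2.1)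
    · exact fun h => absurd (Finset.mem_univ _) h
  · exact Finset.sum_eq_zero fun φ _ => if_neg fun h' => h (h'.2.2.symm.trans h'.2.1)

/-- The product of two diagrams. -/
def mul (D D' : Diagram L K) : Diagram L K where
  V := D.V ⊕ D'.V
  E := D.E ⊕ D'.E
  fintV := inferInstance
  fintE := inferInstance
  src := Sum.map D.src D'.src
  tgt := Sum.map D.tgt D'.tgt
  col := Sum.elim D.col D'.col
  lab := Sum.elim D.lab D'.lab
  vin := Sum.inr D'.vin
  vout := Sum.inl D.vout
  ok q := D.ok (q ∘ Sum.inl) ∧ D'.ok (q ∘ Sum.inr) ∧ q (Sum.inl D.vin) = q (Sum.inr D'.vout)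
  ok_of_comp ι hι _ h :=
    ⟨D.ok_of_comp ι hι _ h.1, D'.ok_of_comp ι hι _ h.2.1, hι h.2.2⟩

lemma eval_mul (D D' : Diagram L K) (A : Fin L → K → Matrix (Fin N) (Fin N) ℂ) :
    (D.mul D').eval A = D.eval A * D'.eval A := by
  ext i j
  rw [Matrix.mul_apply]
  simp only [eval, Matrix.of_apply, Finset.sum_mul_sum]
  have hsum : ∀ f : Fin N → (D.V → Fin N) → (D'.V → Fin N) → ℂ,
      ∑ k, ∑ φ, ∑ φ', f k φ φ' = ∑ p : (D.V → Fin N) × (D'.V → Fin N), ∑ k, f k p.1 p.2 := by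
    intro f
    rw [Fintype.sum_prod_type, Finset.sum_comm]
    exact Finset.sum_congr rfl fun _ _ => Finset.sum_comm
  refine Eq.trans ?_ (hsum _).symm
  let split : ((D.mul D').V → Fin N) ≃ (D.V → Fin N) × (D'.V → Fin N) :=
    Equiv.sumArrowEquivProdArrow D.V D'.V (Fin N)
  refine Fintype.sum_equiv split _ _ fun φ => ?_
  have hw : (D.mul D').weight A φ =
      D.weight A (φ ∘ Sum.inl) * D'.weight A (φ ∘ Sum.inr) := by
    exact Fintype.prod_sum_type _
  have hf : split φ = (φ ∘ Sum.inl, φ ∘ Sum.inr) := rfl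
  rw [hf, hw]
  by_cases h : (D.mul D').ok φ ∧ φ (D.mul D').vin = j ∧ φ (D.mul D').vout = i
  · rw [if_pos h, Finset.sum_eq_single (φ (Sum.inl D.vin)), if_pos, if_pos]
    · exact ⟨h.1.2.1, h.2.1, h.1.2.2.symm⟩
    · exact ⟨h.1.1, rfl, h.2.2⟩
    · intro k _ hk
      rw [if_neg fun h' => hk h'.2.1.symm, zero_mul]
    · simp
  · rw [if_neg h]
    symm
    refine Finset.sum_eq_zero fun k _ => ?_
    by_cases h1 : D.ok (φ ∘ Sum.inl) ∧ (φ ∘ Sum.inl) D.vin = k ∧ (φ ∘ Sum.inl) D.vout = i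
    · by_cases h2 : D'.ok (φ ∘ Sum.inr) ∧ (φ ∘ Sum.inr) D'.vin = j ∧ (φ ∘ Sum.inr) D'.vout = k
      · exact absurd ⟨⟨h1.1, h2.1, h1.2.1.trans h2.2.2.symm⟩, h2.2.1, h1.2.2⟩ h
      · rw [if_neg h2, mul_zero]
    · rw [if_neg h1, zero_mul]

/-- The off-diagonal part of a diagram. -/
def offDiag (D : Diagram L K) : Diagram L K where
  __ := D
  ok q := D.ok q ∧ q D.vout ≠ q D.vin
  ok_of_comp ι hι q h := ⟨D.ok_of_comp ι hι q h.1, fun h' => h.2 (congrArg ι h')⟩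

lemma eval_offDiag (D : Diagram L K) (A : Fin L → K → Matrix (Fin N) (Fin N) ℂ) :
    D.offDiag.eval A = D.eval A - dproj (D.eval A) := by
  ext i j
  simp only [Matrix.sub_apply, dproj, eval, Matrix.of_apply]
  by_cases hij : i = j
  · rw [if_pos hij, sub_self]
    exact Finset.sum_eq_zero fun φ _ => if_neg fun h => h.1.2 (h.2.2.trans (hij.trans h.2.1.symm))
  · rw [if_neg hij, sub_zero]
    refine Finset.sum_congr rfl fun φ _ => if_congr ?_ rfl rfl
    refine ⟨fun h => ⟨h.1.1, h.2⟩, fun h => ⟨⟨h.1, fun h' => hij ?_⟩, h.2⟩⟩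
    exact h.2.2.symm.trans (h'.trans h.2.1)

/-- The diagonal part of a diagram. -/
def diag (D : Diagram L K) : Diagram L K where
  __ := D
  ok q := D.ok q ∧ q D.vout = q D.vin
  ok_of_comp ι hι q h := ⟨D.ok_of_comp ι hι q h.1, hι h.2⟩

lemma eval_diag (D : Diagram L K) (A : Fin L → K → Matrix (Fin N) (Fin N) ℂ) :
    D.diag.eval A = dproj (D.eval A) := by
  ext i j
  simp only [dproj, eval, Matrix.of_apply]
  by_cases hij : i = j
  · rw [if_pos hij]
    refine Finset.sum_congr rfl fun φ _ => if_congr ?_ rfl rfl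
    refine ⟨fun h => ⟨h.1.1, h.2⟩, fun h => ⟨⟨h.1, ?_⟩, h.2⟩⟩
    exact h.2.2.trans (hij.trans h.2.1.symm)
  · rw [if_neg hij]
    exact Finset.sum_eq_zero fun φ _ => if_neg fun h =>
      hij (h.2.2.symm.trans (h.1.2.trans h.2.1))

/-- The adjoint of a diagram. -/
def star (D : Diagram L K) : Diagram L K where
  __ := D
  src := D.tgt
  tgt := D.src
  lab e := ((D.lab e).1, !(D.lab e).2)
  vin := D.vout
  vout := D.vin

lemma eval_star (D : Diagram L K) (A : Fin L → K → Matrix (Fin N) (Fin N) ℂ) :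
    D.star.eval A = (D.eval A)ᴴ := by
  ext i j
  rw [Matrix.conjTranspose_apply]
  simp only [eval, Matrix.of_apply, star_sum]
  refine Finset.sum_congr rfl fun φ _ => ?_
  rw [apply_ite Star.star, star_zero]
  refine if_congr ⟨fun h => ⟨h.1, h.2.2, h.2.1⟩, fun h => ⟨h.1, h.2.2, h.2.1⟩⟩ ?_ rfl
  refine Eq.trans ?_ (star_prod _ _).symm
  refine Finset.prod_congr rfl fun e _ => ?_
  rcases hl : D.lab e with ⟨k, _ | _⟩ <;> simp [star, signed, hl]

/-- The powers of a diagram. -/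
def pow (D : Diagram L K) : ℕ → Diagram L K
  | 0 => one
  | p + 1 => D.mul (D.pow p)

lemma eval_pow (D : Diagram L K) (A : Fin L → K → Matrix (Fin N) (Fin N) ℂ) (p : ℕ) :
    (D.pow p).eval A = D.eval A ^ p := by
  induction p with
  | zero => rw [pow, eval_one, pow_zero]
  | succ p ih => rw [pow, eval_mul, ih, pow_succ']

/-- The product of a list of diagrams. -/
def listProd (l : List (Diagram L K)) : Diagram L K := l.foldr mul one

lemma eval_listProd (l : List (Diagram L K)) (A : Fin L → K → Matrix (Fin N) (Fin N) ℂ) :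
    (listProd l).eval A = (l.map fun D => D.eval A).prod := by
  induction l with
  | nil => exact eval_one A
  | cons D l ih =>
    rw [List.map_cons, List.prod_cons, ← ih, ← eval_mul]
    rfl

end Diagram

namespace Diagram

variable {L N : ℕ} {K : Type}

/-- Every quotient of the diagram by an admissible labelling is connected, and every edge of such a
quotient which is a cut edge separates the two roots. -/
def IsCircular (D : Diagram L K) : Prop :=
  ∀ {W : Type} (q : D.V → W), D.ok q →
    (∀ v, reachOn (q ∘ D.src) (q ∘ D.tgt) ∅ (q v) (q D.vout)) ∧
    ∀ e, reachOn (q ∘ D.src) (q ∘ D.tgt) {e} (q (D.src e)) (q (D.tgt e)) ∨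
      (reachOn (q ∘ D.src) (q ∘ D.tgt) {e} (q (D.src e)) (q D.vout) ∧
        reachOn (q ∘ D.src) (q ∘ D.tgt) {e} (q (D.tgt e)) (q D.vin)) ∨
      (reachOn (q ∘ D.src) (q ∘ D.tgt) {e} (q (D.src e)) (q D.vin) ∧
        reachOn (q ∘ D.src) (q ∘ D.tgt) {e} (q (D.tgt e)) (q D.vout))

/-- In every quotient by an admissible labelling the roots are joined by edges of colour `ℓ`. -/
def JoinedBy (ℓ : Fin L) (D : Diagram L K) : Prop :=
  ∀ {W : Type} (q : D.V → W), D.ok q →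
    reachOn (q ∘ D.src) (q ∘ D.tgt) {e | D.col e ≠ ℓ} (q D.vout) (q D.vin)

/-- In every quotient by an admissible labelling the roots are joined by a chain with the given
colours. -/
def ChainBy (ls : List (Fin L)) (D : Diagram L K) : Prop :=
  ∀ {W : Type} (q : D.V → W), D.ok q →
    ColorChain (q ∘ D.src) (q ∘ D.tgt) D.col ls (q D.vout) (q D.vin)

/-- Every quotient by an admissible labelling contains a closed chain with the given colours. -/
def HasClosedChain (ls : List (Fin L)) (D : Diagram L K) : Prop :=
  ∀ {W : Type} (q : D.V → W), D.ok q →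
    ∃ a, ColorChain (q ∘ D.src) (q ∘ D.tgt) D.col ls a a

lemma reachOn_mul_inl {D D' : Diagram L K} {W : Type} (q : (D.mul D').V → W) {F : Set D.E}
    {G : Set (D.mul D').E} (hFG : ∀ e, e ∉ F → Sum.inl e ∉ G) {a b : W}
    (h : reachOn ((q ∘ Sum.inl) ∘ D.src) ((q ∘ Sum.inl) ∘ D.tgt) F a b) :
    reachOn (q ∘ (D.mul D').src) (q ∘ (D.mul D').tgt) G a b :=
  reachOn_map_edges (Sum.inl : D.E → (D.mul D').E) (fun _ => rfl) (fun _ => rfl) hFG h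

lemma reachOn_mul_inr {D D' : Diagram L K} {W : Type} (q : (D.mul D').V → W) {F : Set D'.E}
    {G : Set (D.mul D').E} (hFG : ∀ e, e ∉ F → Sum.inr e ∉ G) {a b : W}
    (h : reachOn ((q ∘ Sum.inr) ∘ D'.src) ((q ∘ Sum.inr) ∘ D'.tgt) F a b) :
    reachOn (q ∘ (D.mul D').src) (q ∘ (D.mul D').tgt) G a b :=
  reachOn_map_edges (Sum.inr : D'.E → (D.mul D').E) (fun _ => rfl) (fun _ => rfl) hFG h

lemma isCircular_ofMonomial {g : GraphMonomial L K} (hg : g.IsCactusType) :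
    (ofMonomial g).IsCircular := fun q _ =>
  ⟨fun v => reachOn_comp q (hg.2.1 v g.vout),
    fun e => Or.inl (reachOn_comp q (not_not.mp (hg.2.not_isCutEdge e)))⟩

lemma isCircular_edge (ℓ : Fin L) (k : K) : (edge ℓ k).IsCircular := by
  refine fun q _ => ⟨fun v => ?_, fun e => Or.inr (Or.inr ⟨.refl, .refl⟩)⟩
  cases v
  · exact reachOn_of_edge (src := q ∘ (edge ℓ k).src) (tgt := q ∘ (edge ℓ k).tgt)
      (e := ()) (Set.notMem_empty _)
  · exact .refl

lemma isCircular_one : (one : Diagram L K).IsCircular :=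
  fun _ _ => ⟨fun _ => .refl, fun e => Empty.elim e⟩

lemma IsCircular.mul {D D' : Diagram L K} (h : D.IsCircular) (h' : D'.IsCircular) :
    (D.mul D').IsCircular := by
  rintro W q ⟨hq, hq', hm⟩
  obtain ⟨hc, he⟩ := h (q ∘ Sum.inl) hq
  obtain ⟨hc', he'⟩ := h' (q ∘ Sum.inr) hq'
  refine ⟨?_, ?_⟩
  · rintro (v | v)
    · exact reachOn_mul_inl q (fun _ _ => Set.notMem_empty _) (hc v)
    · have h1 := reachOn_mul_inr q (fun _ _ => Set.notMem_empty _) (hc' v)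
      have h2 := reachOn_mul_inl q (fun _ _ => Set.notMem_empty _) (hc D.vin)
      have hm' : (q ∘ Sum.inl) D.vin = (q ∘ Sum.inr) D'.vout := hm
      rw [hm'] at h2
      exact h1.trans h2
  · rintro (e | e)
    · have hr : reachOn (q ∘ (D.mul D').src) (q ∘ (D.mul D').tgt) {Sum.inl e}
          ((q ∘ Sum.inl) D.vin) (q (D.mul D').vin) := by
        have hm' : (q ∘ Sum.inl) D.vin = (q ∘ Sum.inr) D'.vout := hm
        rw [hm']
        exact reachOn_symm (reachOn_mul_inr q (fun _ _ => Sum.inr_ne_inl) (hc' D'.vin))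
      have lift : ∀ {a b}, reachOn ((q ∘ Sum.inl) ∘ D.src) ((q ∘ Sum.inl) ∘ D.tgt) {e} a b →
          reachOn (q ∘ (D.mul D').src) (q ∘ (D.mul D').tgt) {Sum.inl e} a b :=
        reachOn_mul_inl q fun _ hne heq => hne (Sum.inl_injective heq)
      rcases he e with h1 | ⟨h1, h2⟩ | ⟨h1, h2⟩
      · exact Or.inl (lift h1)
      · exact Or.inr (Or.inl ⟨lift h1, (lift h2).trans hr⟩)
      · exact Or.inr (Or.inr ⟨(lift h1).trans hr, lift h2⟩)
    · have hr : reachOn (q ∘ (D.mul D').src) (q ∘ (D.mul D').tgt) {Sum.inr e}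
          ((q ∘ Sum.inr) D'.vout) (q (D.mul D').vout) := by
        have hm' : (q ∘ Sum.inl) D.vin = (q ∘ Sum.inr) D'.vout := hm
        rw [← hm']
        exact reachOn_mul_inl q (fun _ _ => Sum.inl_ne_inr) (hc D.vin)
      have lift : ∀ {a b}, reachOn ((q ∘ Sum.inr) ∘ D'.src) ((q ∘ Sum.inr) ∘ D'.tgt) {e} a b →
          reachOn (q ∘ (D.mul D').src) (q ∘ (D.mul D').tgt) {Sum.inr e} a b :=
        reachOn_mul_inr q fun _ hne heq => hne (Sum.inr_injective heq)
      rcases he' e with h1 | ⟨h1, h2⟩ | ⟨h1, h2⟩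
      · exact Or.inl (lift h1)
      · exact Or.inr (Or.inl ⟨(lift h1).trans hr, lift h2⟩)
      · exact Or.inr (Or.inr ⟨lift h1, (lift h2).trans hr⟩)

lemma IsCircular.offDiag {D : Diagram L K} (h : D.IsCircular) : D.offDiag.IsCircular :=
  fun q hq => h q hq.1

lemma IsCircular.diag {D : Diagram L K} (h : D.IsCircular) : D.diag.IsCircular :=
  fun q hq => h q hq.1

lemma IsCircular.star {D : Diagram L K} (h : D.IsCircular) : D.star.IsCircular := by
  intro W q hq
  obtain ⟨hc, he⟩ := h q hq
  refine ⟨fun v => reachOn_swap ((hc v).trans (reachOn_symm (hc D.vin))), fun e => ?_⟩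
  rcases he e with h1 | ⟨h1, h2⟩ | ⟨h1, h2⟩
  · exact Or.inl (reachOn_swap (reachOn_symm h1))
  · exact Or.inr (Or.inl ⟨reachOn_swap h2, reachOn_swap h1⟩)
  · exact Or.inr (Or.inr ⟨reachOn_swap h2, reachOn_swap h1⟩)

lemma IsCircular.pow {D : Diagram L K} (h : D.IsCircular) (p : ℕ) : (D.pow p).IsCircular := by
  induction p with
  | zero => exact isCircular_one
  | succ p ih => exact h.mul ih

lemma isCircular_listProd {l : List (Diagram L K)} (h : ∀ D ∈ l, D.IsCircular) :
    (listProd l).IsCircular := by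
  induction l with
  | nil => exact isCircular_one
  | cons D l ih =>
    exact IsCircular.mul (h D List.mem_cons_self)
      (ih fun D' hD' => h D' (List.mem_cons_of_mem _ hD'))

lemma joinedBy_ofMonomial {g : GraphMonomial L K} (hg : g.vin = g.vout) (ℓ : Fin L) :
    JoinedBy ℓ (ofMonomial g) := by
  intro W q _
  have : q (ofMonomial g).vin = q (ofMonomial g).vout := congrArg q hg
  rw [this]
  exact .refl

lemma joinedBy_edge (ℓ : Fin L) (k : K) : JoinedBy ℓ (edge ℓ k) := fun q _ =>
  reachOn_of_edge_symm (src := q ∘ (edge ℓ k).src) (tgt := q ∘ (edge ℓ k).tgt)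
    (e := ()) (fun h => h rfl)

lemma joinedBy_one (ℓ : Fin L) : JoinedBy ℓ (one : Diagram L K) := fun _ _ => .refl

lemma JoinedBy.mul {ℓ : Fin L} {D D' : Diagram L K} (h : JoinedBy ℓ D) (h' : JoinedBy ℓ D') :
    JoinedBy ℓ (D.mul D') := by
  rintro W q ⟨hq, hq', hm⟩
  have h1 : reachOn (q ∘ (D.mul D').src) (q ∘ (D.mul D').tgt) {e | (D.mul D').col e ≠ ℓ} _ _ :=
    reachOn_mul_inl q (fun _ he => he) (h _ hq)
  have h2 : reachOn (q ∘ (D.mul D').src) (q ∘ (D.mul D').tgt) {e | (D.mul D').col e ≠ ℓ} _ _ :=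
    reachOn_mul_inr q (fun _ he => he) (h' _ hq')
  have hm' : (q ∘ Sum.inl) D.vin = (q ∘ Sum.inr) D'.vout := hm
  rw [← hm'] at h2
  exact h1.trans h2

lemma joinedBy_listProd {ℓ : Fin L} {l : List (Diagram L K)} (h : ∀ D ∈ l, JoinedBy ℓ D) :
    JoinedBy ℓ (listProd l) := by
  induction l with
  | nil => exact joinedBy_one ℓ
  | cons D l ih =>
    exact JoinedBy.mul (h D List.mem_cons_self)
      (ih fun D' hD' => h D' (List.mem_cons_of_mem _ hD'))

lemma chainBy_listProd_offDiag {ι : Type*} (f : ι → Diagram L K) (ℓ : ι → Fin L)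
    (h : ∀ i, JoinedBy (ℓ i) (f i)) (l : List ι) :
    ChainBy (l.map ℓ) (listProd (l.map fun i => (f i).offDiag)) := by
  induction l with
  | nil => exact fun _ _ => rfl
  | cons i l ih =>
    rintro W q ⟨hq, hq', hm⟩
    let D' := listProd (l.map fun i => (f i).offDiag)
    refine ⟨q (Sum.inl (f i).vin), hq.2, ?_, ?_⟩
    · exact reachOn_mul_inl (D := (f i).offDiag) (D' := D') q (fun _ he => he) (h i _ hq.1)
    · have h1 := ih (q ∘ Sum.inr) hq'
      have hm' : q (Sum.inl (f i).vin) = (q ∘ Sum.inr) D'.vout := hm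
      rw [hm']
      exact h1.map_edges (Sum.inr : D'.E → ((f i).offDiag.mul D').E) (fun _ => rfl) (fun _ => rfl)
        (fun _ => rfl)

lemma ChainBy.diag {ls : List (Fin L)} {D : Diagram L K} (h : ChainBy ls D) :
    HasClosedChain ls D.diag := by
  intro W q hq
  have h1 := h q hq.1
  rw [hq.2] at h1
  exact ⟨_, h1⟩

lemma HasClosedChain.mul_right {ls : List (Fin L)} {D : Diagram L K} (h : HasClosedChain ls D)
    (D' : Diagram L K) : HasClosedChain ls (D.mul D') := by
  rintro W q ⟨hq, -, -⟩
  obtain ⟨a, ha⟩ := h _ hq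
  exact ⟨a, ha.map_edges (Sum.inl : D.E → (D.mul D').E) (fun _ => rfl) (fun _ => rfl)
    (fun _ => rfl)⟩

lemma IsCircular.isTightLabel {D : Diagram L K} (h : D.IsCircular) {ls : List (Fin L)}
    (hch : HasClosedChain ls D) (hne : ls ≠ []) (hls : ls.IsChain (· ≠ ·)) {W : Type}
    {q : D.V → W} (hsurj : Function.Surjective q) (hq : D.ok q) (hroot : q D.vout = q D.vin) :
    IsTightLabel D.src D.tgt D.col q := by
  obtain ⟨hc, he⟩ := h q hq
  refine ⟨fun a b => ?_, fun e => not_not.mpr ?_, ?_⟩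
  · obtain ⟨v, rfl⟩ := hsurj a
    obtain ⟨w, rfl⟩ := hsurj b
    exact (hc v).trans (reachOn_symm (hc w))
  · rw [hroot] at he
    rcases he e with h1 | ⟨h1, h2⟩ | ⟨h1, h2⟩
    · exact h1
    · exact h1.trans (reachOn_symm h2)
    · exact h1.trans (reachOn_symm h2)
  · obtain ⟨a, ha⟩ := hch q hq
    exact ha.exists_live hne hls

end Diagram

/-- Conjugation of each family by its own permutation. -/
def permuted {L N : ℕ} {K : Type} (σ : Fin L → Equiv.Perm (Fin N))
    (A : Fin L → K → Matrix (Fin N) (Fin N) ℂ) (ℓ : Fin L) (k : K) :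
    Matrix (Fin N) (Fin N) ℂ :=
  (A ℓ k).submatrix (σ ℓ) (σ ℓ)

section Signed

variable {L N : ℕ} {K : Type} (A : Fin L → K → Matrix (Fin N) (Fin N) ℂ)

lemma signed_permuted (σ : Fin L → Equiv.Perm (Fin N)) (ℓ : Fin L) (x : K × Bool) (i j : Fin N) :
    signed (permuted σ A) ℓ x i j = signed A ℓ x (σ ℓ i) (σ ℓ j) := by
  rcases x with ⟨k, _ | _⟩ <;> rfl

lemma matOpNorm_signed (ℓ : Fin L) (x : K × Bool) :
    matOpNorm (signed A ℓ x) = matOpNorm (A ℓ x.1) := by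
  rcases x with ⟨k, _ | _⟩
  · exact matOpNorm_conjTranspose _
  · rfl

end Signed

namespace Diagram

variable {L N : ℕ} {K : Type}

/-- The diagram of a monomial with graph monomial coefficients. -/
def cactusMonomial (ℓi : Fin L) (dd : ℕ) (kk : ℕ → K) (gg : ℕ → GraphMonomial L K) :
    Diagram L K :=
  (ofMonomial (gg 0)).mul (listProd (List.ofFn fun j : Fin dd =>
    (edge ℓi (kk ((j : ℕ) + 1))).mul (ofMonomial (gg ((j : ℕ) + 1)))))

lemma eval_cactusMonomial (A : Fin L → K → Matrix (Fin N) (Fin N) ℂ) (ℓi : Fin L) (dd : ℕ)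
    (kk : ℕ → K) (gg : ℕ → GraphMonomial L K) :
    (cactusMonomial ℓi dd kk gg).eval A = cactusMonomialEval A ℓi dd kk gg := by
  rw [cactusMonomial, cactusMonomialEval, eval_mul, eval_listProd, eval_ofMonomial, List.map_ofFn]
  simp only [Function.comp_def, eval_mul, eval_edge, eval_ofMonomial]

lemma isCircular_cactusMonomial {ℓi : Fin L} {dd : ℕ} {kk : ℕ → K} {gg : ℕ → GraphMonomial L K}
    (hg : ∀ j, j ≤ dd → (gg j).IsCactusType) : (cactusMonomial ℓi dd kk gg).IsCircular := by
  refine IsCircular.mul (isCircular_ofMonomial (hg 0 (Nat.zero_le _))) (isCircular_listProd ?_)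
  intro D hD
  obtain ⟨j, rfl⟩ := List.mem_ofFn.mp hD
  exact IsCircular.mul (isCircular_edge _ _) (isCircular_ofMonomial (hg _ j.2))

lemma joinedBy_cactusMonomial {ℓi : Fin L} {dd : ℕ} {kk : ℕ → K} {gg : ℕ → GraphMonomial L K}
    (hg : ∀ j, j ≤ dd → (gg j).IsCactusType) : JoinedBy ℓi (cactusMonomial ℓi dd kk gg) := by
  refine JoinedBy.mul (joinedBy_ofMonomial (hg 0 (Nat.zero_le _)).1 _) (joinedBy_listProd ?_)
  intro D hD
  obtain ⟨j, rfl⟩ := List.mem_ofFn.mp hD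
  exact JoinedBy.mul (joinedBy_edge _ _) (joinedBy_ofMonomial (hg _ j.2).1 _)

/-- The diagonal part of the product of the off-diagonal parts of diagrams. -/
def centered {n : ℕ} (f : Fin n → Diagram L K) : Diagram L K :=
  (listProd ((List.finRange n).map fun i => (f i).offDiag)).diag

lemma eval_centered (A : Fin L → K → Matrix (Fin N) (Fin N) ℂ) {n : ℕ}
    (f : Fin n → Diagram L K) :
    (centered f).eval A = dproj (centeredProd fun i => (f i).eval A) := by
  rw [centered, eval_diag, eval_listProd, centeredProd, List.map_map, List.ofFn_eq_map]
  simp only [Function.comp_def, eval_offDiag]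

lemma isCircular_centered {n : ℕ} {f : Fin n → Diagram L K} (h : ∀ i, (f i).IsCircular) :
    (centered f).IsCircular := by
  refine IsCircular.diag (isCircular_listProd fun D hD => ?_)
  obtain ⟨i, -, rfl⟩ := List.mem_map.mp hD
  exact IsCircular.offDiag (h i)

lemma hasClosedChain_centered {n : ℕ} {f : Fin n → Diagram L K} {ℓ : Fin n → Fin L}
    (h : ∀ i, JoinedBy (ℓ i) (f i)) : HasClosedChain ((List.finRange n).map ℓ) (centered f) :=
  ChainBy.diag (chainBy_listProd_offDiag f ℓ h _)

lemma weight_permuted (D : Diagram L K) (A : Fin L → K → Matrix (Fin N) (Fin N) ℂ)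
    (σ : Fin L → Equiv.Perm (Fin N)) (φ : D.V → Fin N) :
    D.weight (permuted σ A) φ =
      ∏ e, signed A (D.col e) (D.lab e) (σ (D.col e) (φ (D.tgt e))) (σ (D.col e) (φ (D.src e))) :=
  Finset.prod_congr rfl fun _ _ => signed_permuted _ _ _ _ _ _

/-- A constant depending only on the diagram. -/
def bound (D : Diagram L K) : ℝ :=
  (2 ^ Fintype.card D.V * 5 ^ (Fintype.card D.V * Fintype.card D.V) * 4 ^ Fintype.card D.E) ^ L *
    4 ^ (2 * (L * Fintype.card D.V)) * (Fintype.card D.V : ℝ) ^ Fintype.card D.V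

lemma norm_sum_trace_eval_permuted_le {D : Diagram L K} (hD : D.IsCircular) {ls : List (Fin L)}
    (hch : HasClosedChain ls D) (hne : ls ≠ []) (hls : ls.IsChain (· ≠ ·))
    {A : Fin L → K → Matrix (Fin N) (Fin N) ℂ} {C : ℝ} (hC : 0 < C)
    (hA : ∀ ℓ k, matOpNorm (A ℓ k) ≤ C) (hN : 2 * Fintype.card D.V ≤ N) (hN0 : 0 < N) :
    ‖∑ σ : Fin L → Equiv.Perm (Fin N), (D.eval (permuted σ A)).trace‖ ≤
      (N.factorial : ℝ) ^ L * (C ^ Fintype.card D.E * D.bound) := by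
  let B : D.E → Matrix (Fin N) (Fin N) ℂ := fun e => (C⁻¹ : ℂ) • signed A (D.col e) (D.lab e)
  have hB : ∀ e, matOpNorm (B e) ≤ 1 := by
    intro e
    rw [matOpNorm_smul, matOpNorm_signed, norm_inv, Complex.norm_real, Real.norm_of_nonneg hC.le]
    exact (inv_mul_le_one₀ hC).mpr (hA _ _)
  have hBe : ∀ e i j, signed A (D.col e) (D.lab e) i j = C * B e i j := by
    intro e i j
    have : (C : ℂ) ≠ 0 := by exact_mod_cast hC.ne'
    simp [B, this]
  have h := norm_sum_perms_sum_le D.src D.tgt D.col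
    (Finset.univ.filter (fun φ : D.V → Fin N => D.ok φ ∧ φ D.vout = φ D.vin)) (fun φ hφ => by
      obtain ⟨-, hφ, hroot⟩ := Finset.mem_filter.mp hφ
      exact hD.isTightLabel hch hne hls Set.rangeFactorization_surjective
        (D.ok_of_comp Subtype.val Subtype.val_injective _ hφ) (Subtype.ext hroot)) hB hN hN0
  have heq : ∑ σ : Fin L → Equiv.Perm (Fin N), (D.eval (permuted σ A)).trace =
      (C : ℂ) ^ Fintype.card D.E * ∑ σ : Fin L → Equiv.Perm (Fin N),
        ∑ φ ∈ Finset.univ.filter (fun φ : D.V → Fin N => D.ok φ ∧ φ D.vout = φ D.vin),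
          ∏ e, B e (σ (D.col e) (φ (D.tgt e))) (σ (D.col e) (φ (D.src e))) := by
    simp_rw [trace_eval, weight_permuted, hBe, Finset.prod_mul_distrib, Finset.prod_const,
      Finset.card_univ, Finset.mul_sum]
  rw [heq, norm_mul, norm_pow, Complex.norm_real, Real.norm_of_nonneg hC.le,
    mul_left_comm (_ ^ L : ℝ)]
  exact mul_le_mul_of_nonneg_left h (by positivity)

lemma ok_perm_comp (D : Diagram L K) (τ : Equiv.Perm (Fin N)) (φ : D.V → Fin N) :
    D.ok (τ ∘ φ) ↔ D.ok φ := by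
  refine ⟨D.ok_of_comp τ τ.injective φ, fun h => D.ok_of_comp τ.symm τ.symm.injective _ ?_⟩
  rwa [← Function.comp_assoc, Equiv.symm_comp_self]

lemma trace_eval_permuted_const (D : Diagram L K) (A : Fin L → K → Matrix (Fin N) (Fin N) ℂ)
    (τ : Equiv.Perm (Fin N)) :
    (D.eval (permuted (fun _ => τ) A)).trace = (D.eval A).trace := by
  rw [trace_eval, trace_eval]
  refine Finset.sum_equiv (Equiv.arrowCongr (Equiv.refl D.V) τ) (fun φ => ?_) fun φ _ => ?_
  · simp only [Finset.mem_filter, Finset.mem_univ, true_and]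
    exact and_congr (D.ok_perm_comp τ φ).symm τ.injective.eq_iff.symm
  · exact D.weight_permuted A _ φ

end Diagram

/-! ### Averaging over permutations -/

section Averaging

variable {Ω K : Type} [MeasurableSpace Ω] {L N : ℕ} {μ : Measure Ω}

/-- The σ-algebra of a family is generated by the array of all its entries. -/
lemma famSigma_eq_comap (A : K → Ω → Matrix (Fin N) (Fin N) ℂ) :
    famSigma A = MeasurableSpace.comap (fun ω (k : K) (i j : Fin N) => A k ω i j)
      inferInstance := by
  simp only [famSigma, MeasurableSpace.pi, MeasurableSpace.comap_iSup, MeasurableSpace.comap_comp,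
    Function.comp_def]

/-- Replacing independent variables by functions of them with the same laws does not change
expectations. -/
lemma integral_comp_eq_of_iIndepFun [IsProbabilityMeasure μ] {S : Type} [MeasurableSpace S]
    {X : Fin L → Ω → S} (hX : ∀ ℓ, Measurable (X ℓ)) (hind : iIndepFun X μ) {t : Fin L → S → S}
    (ht : ∀ ℓ, Measurable (t ℓ)) (hlaw : ∀ ℓ, μ.map (t ℓ ∘ X ℓ) = μ.map (X ℓ))
    {F : (Fin L → S) → ℂ} (hF : Measurable F) :
    ∫ ω, F (fun ℓ => t ℓ (X ℓ ω)) ∂μ = ∫ ω, F (fun ℓ => X ℓ ω) ∂μ := by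
  have hX' : ∀ ℓ, Measurable (t ℓ ∘ X ℓ) := fun ℓ => (ht ℓ).comp (hX ℓ)
  have h1 := (iIndepFun_iff_map_fun_eq_pi_map fun ℓ => (hX ℓ).aemeasurable).mp hind
  have h2 := (iIndepFun_iff_map_fun_eq_pi_map fun ℓ => (hX' ℓ).aemeasurable).mp (hind.comp t ht)
  simp only [hlaw] at h2
  have e1 := integral_map (measurable_pi_lambda _ hX).aemeasurable
    (hF.aestronglyMeasurable (μ := μ.map fun ω ℓ => X ℓ ω))
  have e2 := integral_map (measurable_pi_lambda _ hX').aemeasurable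
    (hF.aestronglyMeasurable (μ := μ.map fun ω ℓ => (t ℓ ∘ X ℓ) ω))
  rw [← e1, h1, ← h2, e2]
  rfl

lemma Diagram.measurable_trace_eval {α : Type*} [MeasurableSpace α] (D : Diagram L K)
    {A : α → Fin L → K → Matrix (Fin N) (Fin N) ℂ}
    (hA : ∀ ℓ k i j, Measurable fun a => A a ℓ k i j) :
    Measurable fun a => (D.eval (A a)).trace := by
  simp only [Diagram.trace_eval, Diagram.weight]
  refine Finset.measurable_sum _ fun φ _ => Finset.measurable_prod _ fun e _ => ?_
  rcases D.lab e with ⟨k, _ | _⟩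
  · exact Complex.continuous_conj.measurable.comp (hA _ _ _ _)
  · exact hA _ _ _ _

lemma integral_trace_eval_permuted [Finite K] [IsProbabilityMeasure μ] (D : Diagram L K)
    {A : Fin L → K → Ω → Matrix (Fin N) (Fin N) ℂ} (hmeas : ∀ ℓ k, EntriesMeasurable (A ℓ k))
    (hind : iIndep (fun ℓ => famSigma (A ℓ)) μ) {ℓ₀ : Fin L}
    (hperm : ∀ ℓ, ℓ ≠ ℓ₀ → PermInvariant μ (A ℓ)) (σ : Fin L → Equiv.Perm (Fin N)) :
    ∫ ω, (D.eval (permuted σ fun ℓ k => A ℓ k ω)).trace ∂μ =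
      ∫ ω, (D.eval fun ℓ k => A ℓ k ω).trace ∂μ := by
  let X : Fin L → Ω → K → Fin N → Fin N → ℂ := fun ℓ ω k i j => A ℓ k ω i j
  have hX : ∀ ℓ, Measurable (X ℓ) := fun ℓ => measurable_pi_lambda _ fun k =>
    measurable_pi_lambda _ fun i => measurable_pi_lambda _ fun j => hmeas ℓ k i j
  have hind' : iIndepFun X μ := by
    simp only [famSigma_eq_comap] at hind
    exact hind
  let ρ : Fin L → Equiv.Perm (Fin N) := fun ℓ => σ ℓ * (σ ℓ₀)⁻¹
  have hσ : ∀ B : Fin L → K → Matrix (Fin N) (Fin N) ℂ,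
      permuted σ B = permuted (fun _ => σ ℓ₀) (permuted ρ B) := by
    intro B
    ext ℓ k i j
    simp [permuted, ρ]
  simp only [hσ, Diagram.trace_eval_permuted_const]
  refine integral_comp_eq_of_iIndepFun hX hind'
    (t := fun ℓ x k i j => x k (ρ ℓ i) (ρ ℓ j)) (fun ℓ => by fun_prop) (fun ℓ => ?_)
    (F := fun x => (D.eval fun ℓ k => Matrix.of (x ℓ k)).trace)
    (D.measurable_trace_eval fun ℓ k i j => ?_)
  · by_cases hℓ : ℓ = ℓ₀
    · subst hℓ
      simp [ρ, Function.comp_def]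
    · exact hperm ℓ hℓ (ρ ℓ)
  · simp only [Matrix.of_apply]
    fun_prop

lemma Diagram.norm_integral_trace_eval_le [Finite K] [IsProbabilityMeasure μ] {D : Diagram L K}
    (hD : D.IsCircular) {ls : List (Fin L)} (hch : HasClosedChain ls D) (hne : ls ≠ [])
    (hls : ls.IsChain (· ≠ ·)) {A : Fin L → K → Ω → Matrix (Fin N) (Fin N) ℂ}
    (hmeas : ∀ ℓ k, EntriesMeasurable (A ℓ k)) (hind : iIndep (fun ℓ => famSigma (A ℓ)) μ)
    {ℓ₀ : Fin L} (hperm : ∀ ℓ, ℓ ≠ ℓ₀ → PermInvariant μ (A ℓ)) {C : ℝ} (hC : 0 < C)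
    (hA : ∀ ℓ k, ∀ᵐ ω ∂μ, matOpNorm (A ℓ k ω) ≤ C) (hN : 2 * Fintype.card D.V ≤ N)
    (hN0 : 0 < N) :
    ‖∫ ω, (D.eval fun ℓ k => A ℓ k ω).trace ∂μ‖ ≤ C ^ Fintype.card D.E * D.bound := by
  have hA' : ∀ᵐ ω ∂μ, ∀ ℓ k, matOpNorm (A ℓ k ω) ≤ C :=
    ae_all_iff.mpr fun ℓ => ae_all_iff.mpr fun k => hA ℓ k
  have h_integrable : ∀ σ : Fin L → Equiv.Perm (Fin N),
      Integrable (fun ω => (D.eval (permuted σ fun ℓ k => A ℓ k ω)).trace) μ := by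
    intro σ
    refine Integrable.of_bound (C := (Finset.univ.filter
      (fun φ : D.V → Fin N => D.ok φ ∧ φ D.vout = φ D.vin)).card * C ^ Fintype.card D.E)
      (D.measurable_trace_eval fun ℓ k i j => hmeas ℓ k _ _).aestronglyMeasurable ?_
    filter_upwards [hA'] with ω hω
    rw [D.trace_eval, ← nsmul_eq_mul]
    refine (norm_sum_le_of_le _ fun φ _ => ?_).trans_eq (Finset.sum_const _)
    rw [D.weight_permuted, norm_prod, ← Finset.card_univ, ← Finset.prod_const]
    refine Finset.prod_le_prod (fun _ _ => norm_nonneg _) fun e _ => ?_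
    exact (norm_entry_le_matOpNorm _ _ _).trans ((matOpNorm_signed _ _ _).trans_le (hω _ _))
  have hsum : (N.factorial : ℂ) ^ L * ∫ ω, (D.eval fun ℓ k => A ℓ k ω).trace ∂μ =
      ∫ ω, ∑ σ : Fin L → Equiv.Perm (Fin N),
        (D.eval (permuted σ fun ℓ k => A ℓ k ω)).trace ∂μ := by
    rw [integral_finsetSum _ fun σ _ => h_integrable σ]
    simp only [integral_trace_eval_permuted D hmeas hind hperm]
    rw [Finset.sum_const, nsmul_eq_mul, Finset.card_univ, Fintype.card_fun, Fintype.card_perm,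
      Fintype.card_fin, Fintype.card_fin, Nat.cast_pow]
  have hbound : ‖∫ ω, ∑ σ : Fin L → Equiv.Perm (Fin N),
      (D.eval (permuted σ fun ℓ k => A ℓ k ω)).trace ∂μ‖ ≤
        (N.factorial : ℝ) ^ L * (C ^ Fintype.card D.E * D.bound) := by
    refine (norm_integral_le_of_norm_le_const (hA'.mono fun ω hω =>
      norm_sum_trace_eval_permuted_le hD hch hne hls hC hω hN hN0)).trans_eq ?_
    simp
  rw [← hsum, norm_mul, norm_pow, Complex.norm_natCast] at hbound
  exact le_of_mul_le_mul_left hbound (by positivity)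

end Averaging

/-- Theorem 2.2.
Independent families of random matrices, uniformly bounded in operator norm,
each of which, except possibly one, is permutation invariant, are
asymptotically free with amalgamation in `(𝒜_N, ℬ_N, Δ)`: for polynomials
`P_{N,i} = g_{0,i}(A_N) X_{k_i(1)} g_{1,i}(A_N) ⋯ X_{k_i(d_i)} g_{d_i,i}(A_N)`
with cactus-type coefficients, `E[(1/N) Tr((ε_N ε_N^*)^p)] → 0`. -/
theorem asymptotically_free_amalg_cactus_coefficients
    {Ω : Type} [MeasurableSpace Ω] (μ : Measure Ω) [IsProbabilityMeasure μ]
    {K : Type} [Nonempty K] [Finite K] {L : ℕ} (hL : 1 ≤ L)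
    (A : (N : ℕ) → Fin L → K → Ω → Matrix (Fin N) (Fin N) ℂ)
    (hmeas : ∀ N ℓ k, EntriesMeasurable (A N ℓ k))
    (hop : UnifOpNormBound μ A)
    (hindep : IndepFamilies μ A)
    (hperm : ∃ ℓ₀ : Fin L, ∀ ℓ : Fin L, ℓ ≠ ℓ₀ → ∀ N : ℕ, PermInvariant μ (A N ℓ))
    (n : ℕ) (hn : 2 ≤ n) (ℓv : Fin n → Fin L)
    (hadj : ∀ (i : ℕ) (h1 : i + 1 < n),
      ℓv ⟨i, Nat.lt_of_succ_lt h1⟩ ≠ ℓv ⟨i + 1, h1⟩)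
    (d : Fin n → ℕ) (hd : ∀ i, 1 ≤ d i) (kv : Fin n → ℕ → K)
    (g : Fin n → ℕ → GraphMonomial L K)
    (hg : ∀ (i : Fin n) (j : ℕ), j ≤ d i → (g i j).IsCactusType)
    (p : ℕ) (hp : 1 ≤ p) :
    Filter.Tendsto
      (fun N : ℕ => ∫ ω,
        (N : ℂ)⁻¹ *
          (fun ε : Matrix (Fin N) (Fin N) ℂ => Matrix.trace ((ε * εᴴ) ^ p))
            (dproj (centeredProd fun i : Fin n =>
              cactusMonomialEval (fun ℓ k => A N ℓ k ω) (ℓv i) (d i) (kv i) (g i))) ∂μ)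
      atTop (nhds 0) := by
  obtain ⟨C, hC⟩ := hop
  obtain ⟨ℓ₀, hℓ₀⟩ := hperm
  let ε : Diagram L K :=
    Diagram.centered fun i => Diagram.cactusMonomial (ℓv i) (d i) (kv i) (g i)
  let D : Diagram L K := (ε.mul ε.star).pow p
  have hε : ε.IsCircular := Diagram.isCircular_centered fun i =>
    Diagram.isCircular_cactusMonomial (hg i)
  have hD : D.IsCircular := Diagram.IsCircular.pow (Diagram.IsCircular.mul hε hε.star) p
  have hch : Diagram.HasClosedChain ((List.finRange n).map ℓv) D := by
    obtain ⟨m, rfl⟩ := Nat.exists_eq_add_of_le' hp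
    have h : Diagram.HasClosedChain ((List.finRange n).map ℓv) ε :=
      Diagram.hasClosedChain_centered fun i => Diagram.joinedBy_cactusMonomial (hg i)
    change Diagram.HasClosedChain _ ((ε.mul ε.star).mul ((ε.mul ε.star).pow m))
    exact Diagram.HasClosedChain.mul_right (Diagram.HasClosedChain.mul_right h _) _
  have hne : (List.finRange n).map ℓv ≠ [] := by
    rw [← List.length_pos_iff, List.length_map, List.length_finRange]
    omega
  have hls : ((List.finRange n).map ℓv).IsChain (· ≠ ·) := by
    rw [List.isChain_iff_getElem]
    intro i hi
    simpa using hadj i (by simpa using hi)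
  have heval : ∀ N ω, (D.eval fun ℓ k => A N ℓ k ω).trace =
      (fun ε : Matrix (Fin N) (Fin N) ℂ => Matrix.trace ((ε * εᴴ) ^ p))
        (dproj (centeredProd fun i : Fin n =>
          cactusMonomialEval (fun ℓ k => A N ℓ k ω) (ℓv i) (d i) (kv i) (g i))) := by
    intro N ω
    simp only [D, ε, Diagram.eval_pow, Diagram.eval_mul, Diagram.eval_star,
      Diagram.eval_centered, Diagram.eval_cactusMonomial]
  simp only [← heval, integral_const_mul]
  have hlim : Tendsto (fun N : ℕ => (N : ℝ)⁻¹ * (max C 1 ^ Fintype.card D.E * D.bound)) atTop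
      (nhds 0) := by
    simpa using tendsto_inv_atTop_nhds_zero_nat (𝕜 := ℝ) |>.mul_const
      (max C 1 ^ Fintype.card D.E * D.bound)
  refine squeeze_zero_norm' ?_ hlim
  filter_upwards [eventually_ge_atTop (2 * Fintype.card D.V), eventually_gt_atTop 0]
    with N hN hN0
  rw [norm_mul, norm_inv, Complex.norm_natCast]
  refine mul_le_mul_of_nonneg_left ?_ (by positivity)
  exact Diagram.norm_integral_trace_eval_le hD hch hne hls (hmeas N) (hindep N)
    (fun ℓ hℓ => hℓ₀ ℓ hℓ N) (lt_max_of_lt_right one_pos)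
    (fun ℓ k => (hC N ℓ k).mono fun ω h => h.trans (le_max_left _ _)) hN hN0
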